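/- Consider the labeled stochastic block model 𝒢(n, a/n, b/n, μ, ν) with true type assignment σ* and a weight function w : 𝓛 → [−1,1]. Assume the technical condition Σ_ℓ w(ℓ)²·(a·μ(ℓ) + b·ν(ℓ)) > 8·ln 2, and assume Σ_ℓ (a·μ(ℓ) − b·ν(ℓ))·w(ℓ) / √(Σ_ℓ (a·μ(ℓ) + b·ν(ℓ))·w(ℓ)²) > 512·√(ln 2). Let Ŷ be any maximizer of ⟨W, Y⟩ over the set {Y : Y positive semidefinite, Y_{uu} = 1 for all u ∈ [n], ⟨J, Y⟩ = 0}, where J is the all-one matrix, and let y be any eigenvector of Ŷ corresponding to its largest eigenvalue, normalized so that ‖y‖ = √n. Then asymptotically almost surely Q(σ*, sign(y)) > 0, where sign(y) ∈ {±1}^n takes the componentwise sign of y. -/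

import Mathlib

open Finset Filter Real

namespace LSBM

/-- Ordered pairs `u < v` of vertices. -/
abbrev Pairs (n : ℕ) := {p : Fin n × Fin n // p.1 < p.2}

/-- A labeled-graph configuration: each pair `u < v` carries `none` (no edge)
or `some ℓ` (an edge with label `ℓ`). -/
abbrev EdgeConf (n : ℕ) (L : Type*) := Pairs n → Option L

variable {L : Type*}

/-- The label (if any) on the edge between `u` and `v`. -/
def getLabel {n : ℕ} (E : EdgeConf n L) (u v : Fin n) : Option L :=
  if h : u < v then E ⟨(u, v), h⟩ else if h' : v < u then E ⟨(v, u), h'⟩ else none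

/-- Per-pair mass under the labeled stochastic block model. -/
noncomputable def sbmPairMass (n : ℕ) (a b : ℝ) (μ ν : L → ℝ) (same : Bool) : Option L → ℝ
  | none => if same then 1 - a / n else 1 - b / n
  | some ℓ => if same then (a / n) * μ ℓ else (b / n) * ν ℓ

/-- Joint mass of a (type assignment, labeled graph) outcome under the labeled SBM. -/
noncomputable def sbmMass (n : ℕ) (a b : ℝ) (μ ν : L → ℝ)
    (x : (Fin n → Bool) × EdgeConf n L) : ℝ :=
  (1 / 2 : ℝ) ^ n *
    ∏ p : Pairs n, sbmPairMass n a b μ ν (x.1 p.1.1 == x.1 p.1.2) (x.2 p)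

/-- Probability of an event under the labeled SBM (joint in types and graph). -/
noncomputable def sbmProb [Fintype L] (n : ℕ) (a b : ℝ) (μ ν : L → ℝ)
    (A : Set ((Fin n → Bool) × EdgeConf n L)) : ℝ :=
  ∑ x : (Fin n → Bool) × EdgeConf n L, A.indicator (sbmMass n a b μ ν) x

/-- Probability of a labeled-graph event under the labeled SBM (marginal over types). -/
noncomputable def sbmGraphProb [Fintype L] (n : ℕ) (a b : ℝ) (μ ν : L → ℝ)
    (A : Set (EdgeConf n L)) : ℝ :=
  sbmProb n a b μ ν {x | x.2 ∈ A}

/-- Conditional (given the type assignment `σ`) probability of a labeled-graph event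
under the labeled SBM. -/
noncomputable def sbmCondProb [Fintype L] (n : ℕ) (a b : ℝ) (μ ν : L → ℝ)
    (σ : Fin n → Bool) (A : Set (EdgeConf n L)) : ℝ :=
  ∑ E : EdgeConf n L, A.indicator
    (fun E' => ∏ p : Pairs n, sbmPairMass n a b μ ν (σ p.1.1 == σ p.1.2) (E' p)) E

/-- Conditional (given `σ`) expectation of a function of the labeled graph. -/
noncomputable def sbmCondExp [Fintype L] (n : ℕ) (a b : ℝ) (μ ν : L → ℝ)
    (σ : Fin n → Bool) (f : EdgeConf n L → ℝ) : ℝ :=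
  ∑ E : EdgeConf n L,
    (∏ p : Pairs n, sbmPairMass n a b μ ν (σ p.1.1 == σ p.1.2) (E p)) * f E

/-- Per-pair mass under the labeled Erdős–Rényi model. -/
noncomputable def erPairMass (n : ℕ) (a b : ℝ) (μ ν : L → ℝ) : Option L → ℝ
  | none => 1 - (a + b) / (2 * n)
  | some ℓ => ((a + b) / (2 * n)) * ((a * μ ℓ + b * ν ℓ) / (a + b))

/-- Mass of a labeled graph under the labeled Erdős–Rényi model. -/
noncomputable def erMass [Fintype L] (n : ℕ) (a b : ℝ) (μ ν : L → ℝ) (E : EdgeConf n L) : ℝ :=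
  ∏ p : Pairs n, erPairMass n a b μ ν (E p)

/-- Probability of a labeled-graph event under the labeled Erdős–Rényi model. -/
noncomputable def erProb [Fintype L] (n : ℕ) (a b : ℝ) (μ ν : L → ℝ)
    (A : Set (EdgeConf n L)) : ℝ :=
  ∑ E : EdgeConf n L, A.indicator (erMass n a b μ ν) E

/-- Expectation of a function of the labeled graph under the labeled Erdős–Rényi model. -/
noncomputable def erExp [Fintype L] (n : ℕ) (a b : ℝ) (μ ν : L → ℝ)
    (f : EdgeConf n L → ℝ) : ℝ :=
  ∑ E : EdgeConf n L, erMass n a b μ ν E * f E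

/-- `μ` is a probability distribution on the (finite) label set. -/
def IsProbVec [Fintype L] (μ : L → ℝ) : Prop := (∀ ℓ, 0 ≤ μ ℓ) ∧ ∑ ℓ, μ ℓ = 1

/-- The reconstruction-threshold parameter `τ`. -/
noncomputable def tau [Fintype L] (a b : ℝ) (μ ν : L → ℝ) : ℝ :=
  ∑ ℓ, (a * μ ℓ - b * ν ℓ) ^ 2 / (2 * (a * μ ℓ + b * ν ℓ))

/-- The weighted adjacency matrix `W` with `W u v = A u v * w (L u v)`. -/
def Wmat {n : ℕ} (w : L → ℝ) (E : EdgeConf n L) : Matrix (Fin n) (Fin n) ℝ :=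
  fun u v => match getLabel E u v with
    | none => 0
    | some ℓ => w ℓ

/-- The ±1 vector associated with a Boolean type assignment (`true ↦ +1`). -/
def signVec {n : ℕ} (σ : Fin n → Bool) : Fin n → ℝ := fun u => if σ u then 1 else -1

/-- `x` is a vector with entries in `{±1}`. -/
def IsSignVec {n : ℕ} (x : Fin n → ℝ) : Prop := ∀ u, x u = 1 ∨ x u = -1

/-- Componentwise sign of a real vector. -/
noncomputable def signR {n : ℕ} (x : Fin n → ℝ) : Fin n → ℝ :=
  fun u => if 0 ≤ x u then 1 else -1

open Classical in
/-- Hamming distance between two vectors. -/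
noncomputable def hamming {n : ℕ} (x y : Fin n → ℝ) : ℕ :=
  (univ.filter fun u => x u ≠ y u).card

/-- The overlap `Q(x, y) = 1/2 - (1/n) min(d(x,y), d(x,-y))`. -/
noncomputable def overlap (n : ℕ) (x y : Fin n → ℝ) : ℝ :=
  1 / 2 - (1 / n) * min (hamming x y : ℝ) (hamming x (-y) : ℝ)

open Classical in
/-- The weight of the cut induced by a ±1 assignment `σ`:
`∑_{(u,v) : u < v, σ_u ≠ σ_v} W_{uv}`. -/
noncomputable def cutWeight {n : ℕ} (w : L → ℝ) (E : EdgeConf n L) (σ : Fin n → ℝ) : ℝ :=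
  ∑ p : Pairs n, if σ p.1.1 ≠ σ p.1.2 then Wmat w E p.1.1 p.1.2 else 0

/-- The quadratic form `xᵀ M x`. -/
def quadForm {n : ℕ} (M : Matrix (Fin n) (Fin n) ℝ) (x : Fin n → ℝ) : ℝ :=
  ∑ u, ∑ v, x u * M u v * x v

/-- The entrywise inner product `⟨A, B⟩ = ∑_{u,v} A u v * B u v`. -/
def mInner {n : ℕ} (A B : Matrix (Fin n) (Fin n) ℝ) : ℝ :=
  ∑ u, ∑ v, A u v * B u v

/-- The degree of a vertex. -/
def degree {n : ℕ} (E : EdgeConf n L) (u : Fin n) : ℕ :=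
  (univ.filter fun v => (getLabel E u v).isSome).card

open Classical in
/-- The weighted adjacency matrix of the graph obtained by removing all edges incident
to vertices of degree larger than `(3/2)·(a+b)/2`. -/
noncomputable def prunedW {n : ℕ} (a b : ℝ) (w : L → ℝ) (E : EdgeConf n L) :
    Matrix (Fin n) (Fin n) ℝ :=
  fun u v =>
    if (degree E u : ℝ) ≤ (3 / 2) * ((a + b) / 2) ∧
       (degree E v : ℝ) ≤ (3 / 2) * ((a + b) / 2)
    then Wmat w E u v else 0

/-- The conditional (given `σ`) entrywise expectation `E[W | σ]` of the weighted
adjacency matrix. -/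
noncomputable def condEW {n : ℕ} [Fintype L] (a b : ℝ) (μ ν w : L → ℝ)
    (σ : Fin n → Bool) : Matrix (Fin n) (Fin n) ℝ :=
  fun u v =>
    if u = v then 0
    else if σ u = σ v then (a / n) * ∑ ℓ, μ ℓ * w ℓ
    else (b / n) * ∑ ℓ, ν ℓ * w ℓ

/-- The matrix `D' = W' - (α/n) J` used in the spectral method, where
`α = (1/2)·∑_ℓ w(ℓ)(aμ(ℓ)+bν(ℓ))` and `J` is the all-one matrix. -/
noncomputable def Dmat {n : ℕ} [Fintype L] (a b : ℝ) (μ ν w : L → ℝ)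
    (E : EdgeConf n L) : Matrix (Fin n) (Fin n) ℝ :=
  fun u v => prunedW a b w E u v - ((1 / 2) * ∑ ℓ, w ℓ * (a * μ ℓ + b * ν ℓ)) / n

/-- The spectral norm (ℓ²-operator norm) of a real square matrix. -/
noncomputable def specNorm {n : ℕ} (M : Matrix (Fin n) (Fin n) ℝ) : ℝ :=
  ‖Matrix.toEuclideanCLM (𝕜 := ℝ) M‖

/-- The number of `k`-cycles carrying the label sequence `ℓ`, in the canonical
orientation: starting from the minimal-index vertex of the cycle toward its
neighbor of smaller index. -/
def cycleCount [DecidableEq L] (n k : ℕ) (E : EdgeConf n L) (ℓ : Fin k → L) : ℕ :=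
  if hk : 0 < k then
    haveI : NeZero k := ⟨hk.ne'⟩
    (univ.filter fun c : Fin k → Fin n =>
      Function.Injective c ∧ (∀ i, c 0 ≤ c i) ∧
      c 1 < c ⟨k - 1, Nat.sub_lt hk one_pos⟩ ∧
      ∀ i : Fin k, getLabel E (c i) (c (i + 1)) = some (ℓ i)).card
  else 0

/-- The Poisson probability mass function. -/
noncomputable def poissonPMF (m : ℝ) (j : ℕ) : ℝ :=
  Real.exp (-m) * m ^ j / (Nat.factorial j)

/-- The mean cycle count `λ([ℓ]_k)` under the labeled Erdős–Rényi model. -/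
noncomputable def lamER [Fintype L] (a b : ℝ) (μ ν : L → ℝ) {k : ℕ} (ℓ : Fin k → L) : ℝ :=
  (1 / ((2 : ℝ) ^ (k + 1) * k)) * ∏ i, (a * μ (ℓ i) + b * ν (ℓ i))

/-- The mean cycle count `ξ([ℓ]_k)` under the labeled SBM. -/
noncomputable def xiSBM [Fintype L] (a b : ℝ) (μ ν : L → ℝ) {k : ℕ} (ℓ : Fin k → L) : ℝ :=
  (1 / ((2 : ℝ) ^ (k + 1) * k)) *
    (∏ i, (a * μ (ℓ i) + b * ν (ℓ i)) + ∏ i, (a * μ (ℓ i) - b * ν (ℓ i)))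

/-- The per-pair likelihood-ratio factor `W_{uv}(G, L, σ)` (SBM versus labeled
Erdős–Rényi), as a function of the pair status (`same` type or not) and the
edge/label information on the pair. -/
noncomputable def likPair (n : ℕ) (a b : ℝ) (μ ν : L → ℝ) (same : Bool) :
    Option L → ℝ
  | some ℓ =>
      if same then 2 * a * μ ℓ / (a * μ ℓ + b * ν ℓ)
      else 2 * b * ν ℓ / (a * μ ℓ + b * ν ℓ)
  | none =>
      if same then (1 - a / n) / (1 - (a + b) / (2 * n))
      else (1 - b / n) / (1 - (a + b) / (2 * n))

/-- The likelihood ratio `Y_n = ℙ_n / ℙ'_n` of the labeled SBM with respect to the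
labeled Erdős–Rényi model. -/
noncomputable def Ylik [Fintype L] (n : ℕ) (a b : ℝ) (μ ν : L → ℝ)
    (E : EdgeConf n L) : ℝ :=
  (1 / 2 : ℝ) ^ n * ∑ σ : Fin n → Bool,
    ∏ p : Pairs n, likPair n a b μ ν (σ p.1.1 == σ p.1.2) (E p)

/-!
Write `W = E[W | σ] + N`, `S = ∑ (aμ + bν) w²` and `r = √(S log 2)`. With high probability every
bilinear form `xᵀ N y` with `x, y ∈ [-1, 1]ⁿ` is at most `10 n r`: for the light weights, at most
`S / (2 r)`, this is Chernoff's bound and a union bound over the `4ⁿ` pairs of sign vectors, while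
the heavy weights contribute so little in absolute value that no union bound is needed.
Grothendieck's inequality transfers the estimate to all feasible `Y` of the semidefinite program.

On feasible matrices `⟨E[W | σ], Y⟩` is, up to a constant, a multiple of `σᵀ Y σ`. Comparing an
optimal `Y` with `τ τᵀ`, where `τ` is a bisection close to `σ`, shows `σᵀ Y σ ≥ (7/10) n²`. Since
`Y` has trace `n`, its top eigenvector then satisfies `2 ⟨σ, y⟩² > n ‖y‖²`, which forces the signs
of `y` to agree with `σ`, or with `-σ`, on more than half of the vertices.
-/

/-! ### Rademacher sums -/

section Rademacher

variable {k : ℕ}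

lemma signVec_mul_self {n : ℕ} (σ : Fin n → Bool) (u : Fin n) :
    signVec σ u * signVec σ u = 1 := by
  unfold signVec; split_ifs <;> norm_num

lemma signVec_dotProduct_self {n : ℕ} (σ : Fin n → Bool) :
    signVec σ ⬝ᵥ signVec σ = n := by
  simp [dotProduct, signVec_mul_self]

lemma abs_signVec {n : ℕ} (σ : Fin n → Bool) (u : Fin n) : |signVec σ u| = 1 := by
  unfold signVec; split_ifs <;> norm_num

lemma sum_fin_succ_bool {M : Type*} [AddCommMonoid M] (f : (Fin (k + 1) → Bool) → M) :
    ∑ e, f e = ∑ e : Fin k → Bool, (f (Fin.cons true e) + f (Fin.cons false e)) := by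
  rw [← (Fin.consEquiv fun _ => Bool).sum_comp, Fintype.sum_prod_type]
  simp [Fin.consEquiv, Finset.sum_add_distrib]

lemma dotProduct_signVec_cons (u : Fin (k + 1) → ℝ) (s : Bool) (e : Fin k → Bool) :
    u ⬝ᵥ signVec (Fin.cons s e) = u 0 * (if s then 1 else -1) + Fin.tail u ⬝ᵥ signVec e := by
  simp [dotProduct, signVec, Fin.sum_univ_succ, Fin.tail]

lemma sum_dotProduct_signVec_mul (u v : Fin k → ℝ) :
    ∑ e, (u ⬝ᵥ signVec e) * (v ⬝ᵥ signVec e) = 2 ^ k * (u ⬝ᵥ v) := by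
  induction k with
  | zero => simp [dotProduct]
  | succ k ih =>
    have pair (e : Fin k → Bool) :
        (u ⬝ᵥ signVec (Fin.cons true e)) * (v ⬝ᵥ signVec (Fin.cons true e)) +
          (u ⬝ᵥ signVec (Fin.cons false e)) * (v ⬝ᵥ signVec (Fin.cons false e)) =
        2 * (u 0 * v 0) + 2 * ((Fin.tail u ⬝ᵥ signVec e) * (Fin.tail v ⬝ᵥ signVec e)) := by
      simp only [dotProduct_signVec_cons, if_true, Bool.false_eq_true, if_false]
      ring
    have split : u ⬝ᵥ v = u 0 * v 0 + Fin.tail u ⬝ᵥ Fin.tail v := Fin.sum_univ_succ _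
    simp only [sum_fin_succ_bool, pair, Finset.sum_add_distrib, ← Finset.mul_sum, ih, split,
      Finset.sum_const, Finset.card_univ, Fintype.card_fun, Fintype.card_bool, Fintype.card_fin,
      nsmul_eq_mul]
    push_cast
    ring

lemma sum_dotProduct_signVec_pow_four_le (u : Fin k → ℝ) :
    ∑ e, (u ⬝ᵥ signVec e) ^ 4 ≤ 3 * 2 ^ k * (u ⬝ᵥ u) ^ 2 := by
  induction k with
  | zero => simp [dotProduct]
  | succ k ih =>
    have pair (e : Fin k → Bool) :
        (u ⬝ᵥ signVec (Fin.cons true e)) ^ 4 + (u ⬝ᵥ signVec (Fin.cons false e)) ^ 4 =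
        2 * u 0 ^ 4 + 12 * u 0 ^ 2 * ((Fin.tail u ⬝ᵥ signVec e) * (Fin.tail u ⬝ᵥ signVec e)) +
          2 * (Fin.tail u ⬝ᵥ signVec e) ^ 4 := by
      simp only [dotProduct_signVec_cons, if_true, Bool.false_eq_true, if_false]
      ring
    have split : u ⬝ᵥ u = u 0 * u 0 + Fin.tail u ⬝ᵥ Fin.tail u := Fin.sum_univ_succ _
    simp only [sum_fin_succ_bool, pair, Finset.sum_add_distrib, ← Finset.mul_sum,
      sum_dotProduct_signVec_mul, split, Finset.sum_const, Finset.card_univ, Fintype.card_fun,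
      Fintype.card_bool, Fintype.card_fin, nsmul_eq_mul]
    have tail_le := ih (Fin.tail u)
    have head_nonneg : (0 : ℝ) ≤ 2 ^ k * u 0 ^ 4 := by positivity
    push_cast
    ring_nf at tail_le head_nonneg ⊢
    linarith

lemma sum_sq_sum_signVec (n : ℕ) :
    ∑ σ : Fin n → Bool, (∑ u, signVec σ u) ^ 2 = 2 ^ n * n := by
  simpa [dotProduct, ← pow_two] using sum_dotProduct_signVec_mul (k := n) 1 1

end Rademacher

/-! ### Grothendieck's inequality -/

section Grothendieck

/-- Truncation of a real number to the interval `[-c, c]`. -/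
noncomputable def clip (c x : ℝ) : ℝ := max (-c) (min c x)

section Clip

variable {c : ℝ}

lemma abs_clip_le (hc : 0 ≤ c) (x : ℝ) : |clip c x| ≤ c :=
  abs_le.2 ⟨le_max_left _ _, max_le (by linarith) (min_le_left _ _)⟩

lemma clip_neg (hc : 0 ≤ c) (x : ℝ) : clip c (-x) = -clip c x := by
  unfold clip
  grind

lemma clip_of_nonneg (hc : 0 ≤ c) {x : ℝ} (hx : 0 ≤ x) : clip c x = min c x :=
  max_eq_right (by have := le_min hc hx; linarith)

lemma sq_clip_le (hc : 0 ≤ c) (x : ℝ) : clip c x ^ 2 ≤ x ^ 2 := by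
  wlog hx : 0 ≤ x generalizing x
  · simpa [clip_neg hc] using this (-x) (by linarith)
  rw [clip_of_nonneg hc hx]
  exact pow_le_pow_left₀ (le_min hc hx) (min_le_right _ _) 2

lemma sq_sub_clip_le (hc : 0 ≤ c) (x : ℝ) : 16 * c ^ 2 * (x - clip c x) ^ 2 ≤ x ^ 4 := by
  wlog hx : 0 ≤ x generalizing x
  · have := this (-x) (by linarith)
    rw [clip_neg hc] at this
    linear_combination this
  rw [clip_of_nonneg hc hx]
  rcases le_total x c with hxc | hcx
  · rw [min_eq_right hxc, sub_self, zero_pow two_ne_zero, mul_zero]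
    positivity
  · rw [min_eq_left hcx]
    have nonneg : 0 ≤ 4 * c * (x - c) := mul_nonneg (by linarith) (by linarith)
    have le_sq : 4 * c * (x - c) ≤ x ^ 2 := by linarith [sq_nonneg (x - 2 * c)]
    calc 16 * c ^ 2 * (x - c) ^ 2 = (4 * c * (x - c)) ^ 2 := by ring
      _ ≤ (x ^ 2) ^ 2 := pow_le_pow_left₀ nonneg le_sq 2
      _ = x ^ 4 := by ring

end Clip

variable {ι κ : Type*} [Fintype ι] [Fintype κ] {M N : Matrix ι κ ℝ} {A B K : ℝ}

/-- The operator norm of `M` from `ℓ^∞` to `ℓ¹` is at most `B`, expressed by duality. -/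
def InftyOneNormLE (M : Matrix ι κ ℝ) (B : ℝ) : Prop :=
  ∀ (x : ι → ℝ) (y : κ → ℝ), (∀ i, |x i| ≤ 1) → (∀ j, |y j| ≤ 1) →
    ∑ i, ∑ j, M i j * (x i * y j) ≤ B

lemma InftyOneNormLE.add (hM : InftyOneNormLE M A) (hN : InftyOneNormLE N B) :
    InftyOneNormLE (M + N) (A + B) := fun x y hx hy => by
  simpa only [Matrix.add_apply, add_mul, Finset.sum_add_distrib] using
    add_le_add (hM x y hx hy) (hN x y hx hy)

lemma inftyOneNormLE_of_sum_abs_le (h : ∑ i, ∑ j, |M i j| ≤ B) : InftyOneNormLE M B := by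
  intro x y hx hy
  refine le_trans (Finset.sum_le_sum fun i _ => Finset.sum_le_sum fun j _ => ?_) h
  calc M i j * (x i * y j) ≤ |M i j| * (|x i| * |y j|) := by
        simpa only [abs_mul] using le_abs_self (M i j * (x i * y j))
    _ ≤ |M i j| * 1 := by gcongr; exact mul_le_one₀ (hx i) (abs_nonneg _) (hy j)
    _ = |M i j| := mul_one _

lemma exists_sum_mul_le_sum_mul_signVec {n : ℕ} (z : Fin n → ℝ) :
    ∃ σ : Fin n → Bool, ∀ x : Fin n → ℝ, (∀ i, |x i| ≤ 1) →
      ∑ i, x i * z i ≤ ∑ i, signVec σ i * z i := by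
  refine ⟨fun i => decide (0 ≤ z i), fun x hx => Finset.sum_le_sum fun i _ => ?_⟩
  have sign_mul : signVec (fun i => decide (0 ≤ z i)) i * z i = |z i| := by
    rcases le_or_gt 0 (z i) with h | h
    · simp [signVec, h, abs_of_nonneg]
    · simp [signVec, not_le.2 h, abs_of_neg h]
  calc x i * z i ≤ |x i| * |z i| := by simpa only [abs_mul] using le_abs_self (x i * z i)
    _ ≤ 1 * |z i| := by gcongr; exact hx i
    _ = _ := by rw [one_mul, sign_mul]

lemma inftyOneNormLE_of_signVec {m n : ℕ} {M : Matrix (Fin m) (Fin n) ℝ}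
    (h : ∀ σ τ, ∑ i, ∑ j, M i j * (signVec σ i * signVec τ j) ≤ B) : InftyOneNormLE M B := by
  intro x y hx hy
  obtain ⟨σ, hσ⟩ := exists_sum_mul_le_sum_mul_signVec fun i => ∑ j, M i j * y j
  obtain ⟨τ, hτ⟩ := exists_sum_mul_le_sum_mul_signVec fun j => ∑ i, M i j * signVec σ i
  calc ∑ i, ∑ j, M i j * (x i * y j) = ∑ i, x i * ∑ j, M i j * y j := by
        simp only [Finset.mul_sum, mul_left_comm]
    _ ≤ ∑ i, signVec σ i * ∑ j, M i j * y j := hσ x hx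
    _ = ∑ j, y j * ∑ i, M i j * signVec σ i := by
        simp only [Finset.mul_sum]
        rw [Finset.sum_comm]
        exact Finset.sum_congr rfl fun j _ => Finset.sum_congr rfl fun i _ => by ring
    _ ≤ ∑ j, signVec τ j * ∑ i, M i j * signVec σ i := hτ y hy
    _ = ∑ i, ∑ j, M i j * (signVec σ i * signVec τ j) := by
        simp only [Finset.mul_sum]
        rw [Finset.sum_comm]
        exact Finset.sum_congr rfl fun i _ => Finset.sum_congr rfl fun j _ => by ring
    _ ≤ B := h σ τ

lemma InftyOneNormLE.sum_mul_le {c : ℝ} (hM : InftyOneNormLE M B) (hc : 0 < c)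
    {x : ι → ℝ} {y : κ → ℝ} (hx : ∀ i, |x i| ≤ c) (hy : ∀ j, |y j| ≤ c) :
    ∑ i, ∑ j, M i j * (x i * y j) ≤ c ^ 2 * B := by
  have le_one {t : ℝ} (ht : |t| ≤ c) : |t / c| ≤ 1 := by
    rwa [abs_div, abs_of_pos hc, div_le_one hc]
  calc ∑ i, ∑ j, M i j * (x i * y j) = c ^ 2 * ∑ i, ∑ j, M i j * (x i / c * (y j / c)) := by
        simp only [Finset.mul_sum]
        exact Finset.sum_congr rfl fun i _ => Finset.sum_congr rfl fun j _ => by field_simp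
    _ ≤ c ^ 2 * B := by
        gcongr
        exact hM _ _ (fun i => le_one (hx i)) fun j => le_one (hy j)

/-- `K` bounds the value of the vector relaxation of the norm in `InftyOneNormLE`, in which the
scalars in `[-1, 1]` become vectors in the unit ball of a Euclidean space of any dimension. -/
def GrothendieckBound (M : Matrix ι κ ℝ) (K : ℝ) : Prop :=
  ∀ (k : ℕ) (u : ι → EuclideanSpace ℝ (Fin k)) (v : κ → EuclideanSpace ℝ (Fin k)),
    (∀ i, ‖u i‖ ≤ 1) → (∀ j, ‖v j‖ ≤ 1) → ∑ i, ∑ j, M i j * inner ℝ (u i) (v j) ≤ K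

lemma GrothendieckBound.sum_mul_inner_le {E : Type*} [NormedAddCommGroup E]
    [InnerProductSpace ℝ E] (h : GrothendieckBound M K) {R S : ℝ} (hR : 0 < R) (hS : 0 < S)
    {u : ι → E} {v : κ → E} (hu : ∀ i, ‖u i‖ ≤ R) (hv : ∀ j, ‖v j‖ ≤ S) :
    ∑ i, ∑ j, M i j * inner ℝ (u i) (v j) ≤ R * S * K := by
  let F := Submodule.span ℝ (Set.range u ∪ Set.range v)
  have : FiniteDimensional ℝ F :=
    FiniteDimensional.span_of_finite ℝ ((Set.finite_range u).union (Set.finite_range v))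
  let φ := (stdOrthonormalBasis ℝ F).repr
  let u' (i : ι) : F := ⟨u i, Submodule.subset_span (.inl ⟨i, rfl⟩)⟩
  let v' (j : κ) : F := ⟨v j, Submodule.subset_span (.inr ⟨j, rfl⟩)⟩
  have norm_le {T : ℝ} (hT : 0 < T) {x : F} (hx : ‖(x : E)‖ ≤ T) : ‖T⁻¹ • φ x‖ ≤ 1 := by
    rw [norm_smul, norm_inv, Real.norm_of_nonneg hT.le, φ.norm_map, Submodule.coe_norm,
      inv_mul_le_one₀ hT]
    exact hx
  have inner_eq (i : ι) (j : κ) :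
      inner ℝ (u i) (v j) = R * S * inner ℝ (R⁻¹ • φ (u' i)) (S⁻¹ • φ (v' j)) := by
    rw [real_inner_smul_left, real_inner_smul_right, φ.inner_map_map, Submodule.coe_inner]
    field_simp
    rfl
  calc ∑ i, ∑ j, M i j * inner ℝ (u i) (v j) =
        R * S * ∑ i, ∑ j, M i j * inner ℝ (R⁻¹ • φ (u' i)) (S⁻¹ • φ (v' j)) := by
        simp only [inner_eq, Finset.mul_sum, mul_left_comm]
    _ ≤ R * S * K := by
        gcongr
        exact h _ _ _ (fun i => norm_le hR (hu i)) fun j => norm_le hS (hv j)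

lemma grothendieckBound_sum_abs (M : Matrix ι κ ℝ) :
    GrothendieckBound M (∑ i, ∑ j, |M i j|) := by
  intro k u v hu hv
  refine Finset.sum_le_sum fun i _ => Finset.sum_le_sum fun j _ => ?_
  calc M i j * inner ℝ (u i) (v j) ≤ |M i j| * |inner ℝ (u i) (v j)| := by
        simpa only [abs_mul] using le_abs_self (M i j * inner ℝ (u i) (v j))
    _ ≤ |M i j| * (‖u i‖ * ‖v j‖) := by gcongr; exact abs_real_inner_le_norm _ _
    _ ≤ |M i j| * 1 := by gcongr; exact mul_le_one₀ (hu i) (norm_nonneg _) (hv j)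
    _ = |M i j| := mul_one _

section Truncation

variable {k : ℕ}

/-- The Rademacher sum `∑ i, w i * e i`, as a vector indexed by the sign patterns `e`. -/
noncomputable def rademacherVec (w : EuclideanSpace ℝ (Fin k)) :
    EuclideanSpace ℝ (Fin k → Bool) :=
  WithLp.toLp 2 fun e => w.ofLp ⬝ᵥ signVec e

/-- The Rademacher sum truncated at height `4 / 3`, a threshold at which the discarded part has norm
at most `√(2 ^ k) / 3` for `‖w‖ ≤ 1`. -/
noncomputable def truncatedRademacherVec (w : EuclideanSpace ℝ (Fin k)) :
    EuclideanSpace ℝ (Fin k → Bool) :=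
  WithLp.toLp 2 fun e => clip (4 / 3) (w.ofLp ⬝ᵥ signVec e)

lemma inner_rademacherVec (u v : EuclideanSpace ℝ (Fin k)) :
    inner ℝ (rademacherVec u) (rademacherVec v) = 2 ^ k * inner ℝ u v := by
  simpa [rademacherVec, PiLp.inner_apply, dotProduct, mul_comm] using
    sum_dotProduct_signVec_mul u.ofLp v.ofLp

variable {w : EuclideanSpace ℝ (Fin k)}

lemma norm_rademacherVec_le (hw : ‖w‖ ≤ 1) : ‖rademacherVec w‖ ≤ √(2 ^ k) := by
  refine Real.le_sqrt_of_sq_le ?_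
  rw [← real_inner_self_eq_norm_sq, inner_rademacherVec, real_inner_self_eq_norm_sq]
  exact mul_le_of_le_one_right (by positivity) (pow_le_one₀ (norm_nonneg _) hw)

lemma norm_truncatedRademacherVec_le (hw : ‖w‖ ≤ 1) :
    ‖truncatedRademacherVec w‖ ≤ √(2 ^ k) := by
  refine le_trans ?_ (norm_rademacherVec_le hw)
  rw [EuclideanSpace.norm_eq, EuclideanSpace.norm_eq]
  refine Real.sqrt_le_sqrt (Finset.sum_le_sum fun e _ => ?_)
  rw [Real.norm_eq_abs, Real.norm_eq_abs, sq_abs, sq_abs]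
  exact sq_clip_le (by norm_num) _

lemma norm_rademacherVec_sub_truncated_le (hw : ‖w‖ ≤ 1) :
    ‖rademacherVec w - truncatedRademacherVec w‖ ≤ √(2 ^ k) / 3 := by
  have sq_le_one : w.ofLp ⬝ᵥ w.ofLp ≤ 1 := by
    have := pow_le_one₀ (n := 2) (norm_nonneg w) hw
    simpa [EuclideanSpace.norm_sq_eq, dotProduct, ← pow_two] using this
  have nonneg : 0 ≤ w.ofLp ⬝ᵥ w.ofLp := Finset.sum_nonneg fun _ _ => mul_self_nonneg _
  refine (sq_le_sq₀ (norm_nonneg _) (by positivity)).1 ?_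
  rw [div_pow, Real.sq_sqrt (by positivity), EuclideanSpace.norm_sq_eq]
  calc ∑ e, ‖(rademacherVec w - truncatedRademacherVec w) e‖ ^ 2
      ≤ ∑ e, 9 / 256 * (w.ofLp ⬝ᵥ signVec e) ^ 4 := by
        refine Finset.sum_le_sum fun e _ => ?_
        have := sq_sub_clip_le (c := 4 / 3) (by norm_num) (w.ofLp ⬝ᵥ signVec e)
        simp only [rademacherVec, truncatedRademacherVec, PiLp.sub_apply, Real.norm_eq_abs, sq_abs]
        linarith
    _ ≤ 9 / 256 * (3 * 2 ^ k * (w.ofLp ⬝ᵥ w.ofLp) ^ 2) := by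
        rw [← Finset.mul_sum]
        gcongr
        exact sum_dotProduct_signVec_pow_four_le _
    _ ≤ 9 / 256 * (3 * 2 ^ k * 1) := by
        gcongr
        exact pow_le_one₀ nonneg sq_le_one
    _ ≤ 2 ^ k / 3 ^ 2 := by linarith [show (0 : ℝ) < 2 ^ k by positivity]

end Truncation

lemma InftyOneNormLE.sum_mul_inner_truncated_le {k : ℕ} (hM : InftyOneNormLE M B)
    (u : ι → EuclideanSpace ℝ (Fin k)) (v : κ → EuclideanSpace ℝ (Fin k)) :
    ∑ i, ∑ j, M i j * inner ℝ (truncatedRademacherVec (u i)) (truncatedRademacherVec (v j)) ≤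
      2 ^ k * (16 / 9 * B) := by
  have abs_le (w : EuclideanSpace ℝ (Fin k)) (e : Fin k → Bool) :
      |truncatedRademacherVec w e| ≤ 4 / 3 := abs_clip_le (by norm_num) _
  calc _ = ∑ e : Fin k → Bool, ∑ i, ∑ j,
        M i j * (truncatedRademacherVec (u i) e * truncatedRademacherVec (v j) e) := by
        rw [eq_comm, Finset.sum_comm]
        refine Finset.sum_congr rfl fun i _ => ?_
        rw [Finset.sum_comm]
        simp [PiLp.inner_apply, Finset.mul_sum, mul_comm]
    _ ≤ ∑ _e : Fin k → Bool, (4 / 3) ^ 2 * B := Finset.sum_le_sum fun e _ =>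
        hM.sum_mul_le (by norm_num) (fun i => abs_le _ e) fun j => abs_le _ e
    _ = 2 ^ k * (16 / 9 * B) := by
        simp only [Finset.sum_const, Finset.card_univ, Fintype.card_fun, Fintype.card_bool,
          Fintype.card_fin, nsmul_eq_mul]
        push_cast
        ring

/-- The truncated Rademacher sums are handled coordinate by coordinate; each of the two remaining
terms involves a vector shorter by a factor of `3`, to which the current bound is applied. -/
lemma GrothendieckBound.improve (hK : GrothendieckBound M K) (hM : InftyOneNormLE M B) :
    GrothendieckBound M (16 / 9 * B + 2 / 3 * K) := by
  intro k u v hu hv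
  let X (i : ι) := rademacherVec (u i)
  let X' (i : ι) := truncatedRademacherVec (u i)
  let Y (j : κ) := rademacherVec (v j)
  let Y' (j : κ) := truncatedRademacherVec (v j)
  have hpos : 0 < √((2 : ℝ) ^ k) := by positivity
  have hsq : √((2 : ℝ) ^ k) * √(2 ^ k) = 2 ^ k := Real.mul_self_sqrt (by positivity)
  have main := hM.sum_mul_inner_truncated_le u v
  have right := hK.sum_mul_inner_le hpos (div_pos hpos three_pos)
    (fun i => norm_truncatedRademacherVec_le (hu i))
    fun j => norm_rademacherVec_sub_truncated_le (hv j)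
  have left := hK.sum_mul_inner_le (div_pos hpos three_pos) hpos
    (fun i => norm_rademacherVec_sub_truncated_le (hu i)) fun j => norm_rademacherVec_le (hv j)
  have split (i : ι) (j : κ) : 2 ^ k * inner ℝ (u i) (v j) =
      inner ℝ (X' i) (Y' j) + inner ℝ (X' i) (Y j - Y' j) + inner ℝ (X i - X' i) (Y j) := by
    rw [← inner_rademacherVec, inner_sub_left, inner_sub_right]
    ring
  have expand : 2 ^ k * ∑ i, ∑ j, M i j * inner ℝ (u i) (v j) =
      ∑ i, ∑ j, M i j * inner ℝ (X' i) (Y' j) + ∑ i, ∑ j, M i j * inner ℝ (X' i) (Y j - Y' j) +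
        ∑ i, ∑ j, M i j * inner ℝ (X i - X' i) (Y j) := by
    simp only [Finset.mul_sum, ← Finset.sum_add_distrib, ← mul_add, ← split, mul_left_comm]
  refine le_of_mul_le_mul_left ?_ (show (0 : ℝ) < 2 ^ k by positivity)
  rw [expand]
  linear_combination main + right + left + 2 / 3 * K * hsq

lemma InftyOneNormLE.grothendieckBound (hM : InftyOneNormLE M B) :
    GrothendieckBound M (16 / 3 * B) := by
  set A := ∑ i, ∑ j, |M i j|
  have iterate (m : ℕ) : GrothendieckBound M (16 / 3 * B + (2 / 3) ^ m * (A - 16 / 3 * B)) := by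
    induction m with
    | zero => simpa using grothendieckBound_sum_abs M
    | succ m ih =>
      convert ih.improve hM using 1
      ring
  have lim : Tendsto (fun m : ℕ => 16 / 3 * B + (2 / 3 : ℝ) ^ m * (A - 16 / 3 * B)) atTop
      (nhds (16 / 3 * B + 0 * (A - 16 / 3 * B))) :=
    ((tendsto_pow_atTop_nhds_zero_of_lt_one (by norm_num) (by norm_num)).mul_const _).const_add _
  rw [zero_mul, add_zero] at lim
  exact fun k u v hu hv => ge_of_tendsto' lim fun m => iterate m k u v hu hv

theorem grothendieck_inequality {E : Type*} [NormedAddCommGroup E] [InnerProductSpace ℝ E]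
    (hM : InftyOneNormLE M B) {u : ι → E} {v : κ → E} (hu : ∀ i, ‖u i‖ ≤ 1)
    (hv : ∀ j, ‖v j‖ ≤ 1) : ∑ i, ∑ j, M i j * inner ℝ (u i) (v j) ≤ 16 / 3 * B := by
  simpa using hM.grothendieckBound.sum_mul_inner_le one_pos one_pos hu hv

end Grothendieck

/-! ### Positive semidefinite matrices -/

section PosSemidef

open scoped Matrix

variable {ι : Type*} [Fintype ι] {Y : Matrix ι ι ℝ} {lam : ℝ} {y : ι → ℝ}

/-- `y` is an eigenvector (possibly zero) of `Y` for the value `lam`, and no eigenvalue of `Y`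
exceeds `lam`. -/
structure IsTopEigenpair (Y : Matrix ι ι ℝ) (lam : ℝ) (y : ι → ℝ) : Prop where
  mulVec_eq : Y *ᵥ y = lam • y
  le (lam' : ℝ) (z : ι → ℝ) : z ≠ 0 → Y *ᵥ z = lam' • z → lam' ≤ lam

lemma dotProduct_mulVec_le_of_eigenvalues_le [DecidableEq ι] (hY : Y.IsHermitian) {c : ℝ}
    (hc : ∀ i, hY.eigenvalues i ≤ c) (x : ι → ℝ) : x ⬝ᵥ Y *ᵥ x ≤ c * (x ⬝ᵥ x) := by
  have hpos : (algebraMap ℝ (Matrix ι ι ℝ) c - Y).PosSemidef := by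
    refine Matrix.posSemidef_iff_isHermitian_and_spectrum_nonneg.2 ⟨?_, ?_⟩
    · rw [Algebra.algebraMap_eq_smul_one]
      exact (Matrix.isHermitian_one.smul (IsSelfAdjoint.all c)).sub hY
    · rw [← spectrum.singleton_sub_eq, hY.spectrum_real_eq_range_eigenvalues,
        Set.singleton_sub, Set.image_subset_iff, Set.range_subset_iff]
      exact fun i => sub_nonneg.2 (hc i)
  have := (Matrix.posSemidef_iff_dotProduct_mulVec.1 hpos).2 x
  rw [Algebra.algebraMap_eq_smul_one, Matrix.sub_mulVec, Matrix.smul_mulVec, Matrix.one_mulVec,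
    dotProduct_sub, dotProduct_smul, star_trivial, smul_eq_mul] at this
  linarith

lemma dotProduct_mulVec_le_trace_mul (hY : Y.PosSemidef) (x : ι → ℝ) :
    x ⬝ᵥ Y *ᵥ x ≤ Y.trace * (x ⬝ᵥ x) := by
  classical
  refine dotProduct_mulVec_le_of_eigenvalues_le hY.isHermitian (fun i => ?_) x
  rw [hY.isHermitian.trace_eq_sum_eigenvalues]
  exact Finset.single_le_sum (fun j _ => hY.eigenvalues_nonneg j) (Finset.mem_univ i)

lemma IsTopEigenpair.dotProduct_mulVec_le (h : IsTopEigenpair Y lam y) (hY : Y.IsHermitian)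
    (x : ι → ℝ) : x ⬝ᵥ Y *ᵥ x ≤ lam * (x ⬝ᵥ x) := by
  classical
  refine dotProduct_mulVec_le_of_eigenvalues_le hY (fun i => ?_) x
  refine h.le _ (hY.eigenvectorBasis i).ofLp (fun h0 => ?_) (hY.mulVec_eigenvectorBasis i)
  exact hY.eigenvectorBasis.orthonormal.ne_zero i (WithLp.ofLp_injective 2 h0)

lemma dotProduct_deflate_mulVec (Y : Matrix ι ι ℝ) (c : ℝ) (y x : ι → ℝ) :
    x ⬝ᵥ (Y - c • Matrix.vecMulVec y y) *ᵥ x = x ⬝ᵥ Y *ᵥ x - c * (x ⬝ᵥ y) ^ 2 := by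
  rw [Matrix.sub_mulVec, Matrix.smul_mulVec, dotProduct_sub, dotProduct_smul,
    Matrix.vecMulVec_mulVec, op_smul_eq_smul, dotProduct_smul, dotProduct_comm y x, smul_eq_mul,
    smul_eq_mul, pow_two]

lemma posSemidef_deflate (hY : Y.PosSemidef) (hy : Y *ᵥ y = lam • y) :
    (Y - (lam / (y ⬝ᵥ y)) • Matrix.vecMulVec y y).PosSemidef := by
  refine Matrix.posSemidef_iff_dotProduct_mulVec.2 ⟨?_, fun x => ?_⟩
  · refine hY.isHermitian.sub (Matrix.IsHermitian.ext fun i j => ?_)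
    simp [Matrix.vecMulVec_apply, mul_comm]
  · rw [star_trivial, dotProduct_deflate_mulVec]
    set c := x ⬝ᵥ y / (y ⬝ᵥ y)
    have cross : y ⬝ᵥ Y *ᵥ x = lam * (x ⬝ᵥ y) := by
      have hYT : Y.transpose = Y := hY.isHermitian
      rw [Matrix.dotProduct_mulVec, ← Matrix.mulVec_transpose, hYT, hy, smul_dotProduct,
        smul_eq_mul, dotProduct_comm y x]
    have projection : c * (x ⬝ᵥ y) = c ^ 2 * (y ⬝ᵥ y) := by
      rcases eq_or_ne (y ⬝ᵥ y) 0 with h0 | h0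
      · simp [c, h0]
      · simp only [c]; field_simp
    have residual := (Matrix.posSemidef_iff_dotProduct_mulVec.1 hY).2 (x - c • y)
    simp only [star_trivial, Matrix.mulVec_sub, Matrix.mulVec_smul, hy, sub_dotProduct,
      dotProduct_sub, smul_dotProduct, dotProduct_smul, smul_eq_mul, cross] at residual
    have coefficient : lam / (y ⬝ᵥ y) * (x ⬝ᵥ y) ^ 2 = lam * (c * (x ⬝ᵥ y)) := by
      simp only [c]; ring
    rw [coefficient]
    linear_combination residual - lam * projection

lemma dotProduct_mulVec_le_deflate (hY : Y.PosSemidef) (hy : Y *ᵥ y = lam • y) (hy0 : y ≠ 0)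
    (x : ι → ℝ) :
    x ⬝ᵥ Y *ᵥ x ≤ lam / (y ⬝ᵥ y) * (x ⬝ᵥ y) ^ 2 + (Y.trace - lam) * (x ⬝ᵥ x) := by
  have deflated := dotProduct_mulVec_le_trace_mul (posSemidef_deflate hY hy) x
  rw [dotProduct_deflate_mulVec, Matrix.trace_sub, Matrix.trace_smul, Matrix.trace_vecMulVec,
    smul_eq_mul, div_mul_cancel₀ _ (dotProduct_self_eq_zero.not.2 hy0)] at deflated
  linarith

lemma IsTopEigenpair.mul_lt_two_mul_sq_dotProduct (h : IsTopEigenpair Y lam y)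
    (hY : Y.PosSemidef) {N : ℝ} (hN : 0 < N) (htrace : Y.trace = N) {s : ι → ℝ}
    (hs : s ⬝ᵥ s = N) (hy : y ⬝ᵥ y = N) (hq : 7 / 10 * N ^ 2 ≤ s ⬝ᵥ Y *ᵥ s) :
    N * (y ⬝ᵥ y) < 2 * (s ⬝ᵥ y) ^ 2 := by
  have hy0 : y ≠ 0 := by
    rintro rfl
    simp [hN.ne] at hy
  have lam_ge : 7 / 10 * N ≤ lam := by
    have := hq.trans (h.dotProduct_mulVec_le hY.isHermitian s)
    rw [hs] at this
    exact le_of_mul_le_mul_right (by linarith) hN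
  have deflated := hq.trans (dotProduct_mulVec_le_deflate hY h.mulVec_eq hy0 s)
  rw [hy, hs, htrace] at deflated
  rw [hy]
  by_contra! hsmall
  have : lam / N * (s ⬝ᵥ y) ^ 2 ≤ lam / N * (N * N / 2) := by
    gcongr
    · exact div_nonneg (by linarith) hN.le
    · linarith
  have cancel : lam / N * (N * N / 2) = lam * N / 2 := by field_simp
  nlinarith [mul_le_mul_of_nonneg_right lam_ge hN.le, mul_pos hN hN]

end PosSemidef

lemma exists_eq_gram {ι : Type*} [Finite ι] {Y : Matrix ι ι ℝ} (hY : Y.PosSemidef) :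
    ∃ (m : ℕ) (v : ι → EuclideanSpace ℝ (Fin m)), Y = Matrix.gram ℝ v := by
  obtain ⟨m, B, hB⟩ := Matrix.posSemidef_iff_eq_sum_vecMulVec.1 hY
  refine ⟨m, fun i => WithLp.toLp 2 fun k => B k i, ?_⟩
  ext i j
  simp [hB, Matrix.sum_apply, Matrix.vecMulVec_apply, PiLp.inner_apply, mul_comm]

lemma InftyOneNormLE.mInner_le {n : ℕ} {M Y : Matrix (Fin n) (Fin n) ℝ} {B : ℝ}
    (hM : InftyOneNormLE M B) (hY : Y.PosSemidef) (hdiag : ∀ u, Y u u = 1) :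
    mInner M Y ≤ 16 / 3 * B := by
  obtain ⟨m, v, rfl⟩ := exists_eq_gram hY
  have norm_le (u : Fin n) : ‖v u‖ ≤ 1 := by
    have := hdiag u
    rw [Matrix.gram_apply, real_inner_self_eq_norm_sq] at this
    exact ((pow_eq_one_iff_of_nonneg (norm_nonneg _) two_ne_zero).1 this).le
  exact grothendieck_inequality hM norm_le norm_le

/-! ### Overlap -/

section Overlap

variable {n : ℕ} {x z : Fin n → ℝ}

lemma isSignVec_signVec (σ : Fin n → Bool) : IsSignVec (signVec σ) := fun u => by
  unfold signVec; split_ifs <;> simp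

lemma isSignVec_signR (y : Fin n → ℝ) : IsSignVec (signR y) := fun u => by
  unfold signR; split_ifs <;> simp

lemma IsSignVec.ne_neg_iff (hx : IsSignVec x) (hz : IsSignVec z) (u : Fin n) :
    x u ≠ -z u ↔ x u = z u := by
  rcases hx u with h | h <;> rcases hz u with h' | h' <;> norm_num [h, h']

lemma hamming_add_hamming_neg (hx : IsSignVec x) (hz : IsSignVec z) :
    hamming x z + hamming x (-z) = n := by
  simp only [hamming, Pi.neg_apply, hx.ne_neg_iff hz]
  rw [add_comm, Finset.card_filter_add_card_filter_not, Finset.card_univ, Fintype.card_fin]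

lemma overlap_pos_of_hamming_ne (hx : IsSignVec x) (hz : IsSignVec z)
    (h : hamming x z ≠ hamming x (-z)) : 0 < overlap n x z := by
  have hsum := hamming_add_hamming_neg hx hz
  have hn : (0 : ℝ) < n := by
    norm_cast
    lia
  have hmin : 2 * min (hamming x z : ℝ) (hamming x (-z)) < n := by
    norm_cast
    lia
  have : 1 / (n : ℝ) * min (hamming x z : ℝ) (hamming x (-z)) < 1 / 2 := by
    rw [one_div_mul_eq_div, div_lt_iff₀ hn]
    linarith
  exact sub_pos.2 this

lemma overlap_pos_of_odd (hn : Odd n) (hx : IsSignVec x) (hz : IsSignVec z) :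
    0 < overlap n x z := by
  refine overlap_pos_of_hamming_ne hx hz fun h => Nat.not_even_iff_odd.2 hn ⟨hamming x z, ?_⟩
  have := hamming_add_hamming_neg hx hz
  lia

lemma dotProduct_eq_sum_abs_sub_sum_abs (hx : IsSignVec x) (y : Fin n → ℝ) :
    x ⬝ᵥ y = ∑ u with x u ≠ -signR y u, |y u| - ∑ u with x u ≠ signR y u, |y u| := by
  rw [Finset.sum_filter, Finset.sum_filter, ← Finset.sum_sub_distrib]
  refine Finset.sum_congr rfl fun u _ => ?_
  have abs_eq : |y u| = signR y u * y u := by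
    unfold signR
    split_ifs with h
    · rw [abs_of_nonneg h, one_mul]
    · rw [abs_of_neg (not_le.1 h), neg_one_mul]
  rw [abs_eq]
  rcases hx u with h | h <;> rcases isSignVec_signR y u with h' | h' <;> norm_num [h, h']

lemma sq_dotProduct_le_max_hamming_mul (hx : IsSignVec x) (y : Fin n → ℝ) :
    (x ⬝ᵥ y) ^ 2 ≤
      max (hamming x (-signR y) : ℝ) (hamming x (signR y)) * (y ⬝ᵥ y) := by
  have sq_le (T : Finset (Fin n)) : (∑ u ∈ T, |y u|) ^ 2 ≤ #T * (y ⬝ᵥ y) := by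
    refine sq_sum_le_card_mul_sum_sq.trans ?_
    gcongr
    simp only [sq_abs, dotProduct, ← pow_two]
    exact Finset.sum_le_univ_sum_of_nonneg fun u => sq_nonneg _
  have nonneg (T : Finset (Fin n)) : 0 ≤ ∑ u ∈ T, |y u| :=
    Finset.sum_nonneg fun u _ => abs_nonneg _
  have dotProduct_self_nonneg : 0 ≤ y ⬝ᵥ y := Finset.sum_nonneg fun u _ => mul_self_nonneg (y u)
  rw [dotProduct_eq_sum_abs_sub_sum_abs hx, max_mul_of_nonneg _ _ dotProduct_self_nonneg]
  refine le_trans ?_ (max_le_max (sq_le _) (sq_le _))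
  simp only [Pi.neg_apply]
  rcases le_total (∑ u with x u ≠ -signR y u, |y u|) (∑ u with x u ≠ signR y u, |y u|)
    with h | h
  · exact le_max_of_le_right (by nlinarith [nonneg {u | x u ≠ -signR y u}])
  · exact le_max_of_le_left (by nlinarith [nonneg {u | x u ≠ signR y u}])

lemma overlap_signR_pos (hx : IsSignVec x) {y : Fin n → ℝ}
    (h : n * (y ⬝ᵥ y) < 2 * (x ⬝ᵥ y) ^ 2) : 0 < overlap n x (signR y) := by
  refine overlap_pos_of_hamming_ne hx (isSignVec_signR y) fun heq => h.not_ge ?_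
  have hsum : (hamming x (signR y) : ℝ) + hamming x (-signR y) = n :=
    mod_cast hamming_add_hamming_neg hx (isSignVec_signR y)
  have := sq_dotProduct_le_max_hamming_mul hx y
  rw [← heq, max_self] at this
  rw [← heq] at hsum
  rw [← hsum]
  linarith

lemma dotProduct_signVec_of_le {σ τ : Fin n → Bool} (h : τ ≤ σ) :
    signVec σ ⬝ᵥ signVec τ = n - (∑ u, signVec σ u - ∑ u, signVec τ u) := by
  have mul_eq (u : Fin n) :
      signVec σ u * signVec τ u = 1 - (signVec σ u - signVec τ u) := by
    have := h u
    unfold signVec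
    cases hσ : σ u <;> cases hτ : τ u <;> simp_all [Bool.le_iff_imp]
  simp [dotProduct, mul_eq]

lemma sum_signVec_mem (T : Finset (Fin n)) :
    ∑ u, signVec (fun u => decide (u ∈ T)) u = 2 * #T - n := by
  have eq (u : Fin n) :
      signVec (fun u => decide (u ∈ T)) u = 2 * (if u ∈ T then 1 else 0) - 1 := by
    simp only [signVec, decide_eq_true_eq]
    split_ifs <;> norm_num
  simp [eq, mul_comm]

lemma exists_balanced_signVec (hn : Even n) (σ : Fin n → Bool) :
    ∃ τ : Fin n → Bool, ∑ u, signVec τ u = 0 ∧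
      n - |∑ u, signVec σ u| ≤ signVec σ ⬝ᵥ signVec τ := by
  obtain ⟨k, rfl⟩ := hn
  have balanced {T : Finset (Fin (k + k))} (hT : #T = k) :
      ∑ u, signVec (fun u => decide (u ∈ T)) u = 0 := by
    rw [sum_signVec_mem, hT]
    push_cast
    ring
  rcases le_total k #{u | σ u = true} with h | h
  · obtain ⟨T, hTσ, hT⟩ := Finset.exists_subset_card_eq h
    refine ⟨_, balanced hT, ?_⟩
    rw [dotProduct_signVec_of_le fun u => ?_, balanced hT]
    · linarith [le_abs_self (∑ u, signVec σ u)]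
    · by_cases hu : u ∈ T
      · simp [(Finset.mem_filter.1 (hTσ hu)).2]
      · simp [hu]
  · obtain ⟨T, hTσ, hT⟩ := Finset.exists_superset_card_eq h (by simp)
    refine ⟨_, balanced hT, ?_⟩
    rw [dotProduct_comm, dotProduct_signVec_of_le fun u => ?_, balanced hT]
    · linarith [neg_abs_le (∑ u, signVec σ u)]
    · by_cases hu : σ u = true
      · simp [hTσ (Finset.mem_filter.2 ⟨Finset.mem_univ u, hu⟩)]
      · simp [hu]

end Overlap

/-! ### The semidefinite program -/

section SDP

open scoped Matrix

variable {n : ℕ} {M Y : Matrix (Fin n) (Fin n) ℝ}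

/-- The feasible set of the semidefinite relaxation of minimum bisection: positive semidefinite
matrices with unit diagonal which are orthogonal to the all-one matrix. -/
structure IsSDPFeasible (Y : Matrix (Fin n) (Fin n) ℝ) : Prop where
  posSemidef : Y.PosSemidef
  diag u : Y u u = 1
  balanced : mInner (fun _ _ => 1) Y = 0

/-- `Y` solves the semidefinite relaxation of minimum bisection with objective `⟨M, Y⟩`. -/
structure IsSDPMaximizer (M Y : Matrix (Fin n) (Fin n) ℝ) : Prop extends IsSDPFeasible Y where
  mInner_le Z : IsSDPFeasible Z → mInner M Z ≤ mInner M Y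

lemma mInner_add_left (A B Z : Matrix (Fin n) (Fin n) ℝ) :
    mInner (A + B) Z = mInner A Z + mInner B Z := by
  simp only [mInner, Matrix.add_apply, add_mul, Finset.sum_add_distrib]

lemma mInner_vecMulVec (A : Matrix (Fin n) (Fin n) ℝ) (x y : Fin n → ℝ) :
    mInner A (Matrix.vecMulVec x y) = ∑ u, ∑ v, A u v * (x u * y v) := by
  simp only [mInner, Matrix.vecMulVec_apply]

lemma isSDPFeasible_vecMulVec_signVec {τ : Fin n → Bool} (hτ : ∑ u, signVec τ u = 0) :
    IsSDPFeasible (Matrix.vecMulVec (signVec τ) (signVec τ)) where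
  posSemidef := by simpa using Matrix.posSemidef_vecMulVec_self_star (signVec τ)
  diag u := by rw [Matrix.vecMulVec_apply, signVec_mul_self]
  balanced := by
    simp only [mInner, Matrix.vecMulVec_apply, one_mul, ← Finset.mul_sum, hτ, mul_zero,
      Finset.sum_const_zero]

lemma neg_le_mInner_vecMulVec_signVec {B : ℝ} (hM : InftyOneNormLE M B) (τ : Fin n → Bool) :
    -B ≤ mInner M (Matrix.vecMulVec (signVec τ) (signVec τ)) := by
  have := hM (signVec τ) (-signVec τ) (fun u => (abs_signVec τ u).le)
    (fun u => by rw [Pi.neg_apply, abs_neg, abs_signVec])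
  simp only [Pi.neg_apply, mul_neg, Finset.sum_neg_distrib] at this
  rw [mInner_vecMulVec]
  linarith

variable [Fintype L] {a b : ℝ} {μ ν w : L → ℝ} {σ : Fin n → Bool}

lemma condEW_apply_eq (u v : Fin n) :
    condEW a b μ ν w σ u v =
      (∑ ℓ, (a * μ ℓ + b * ν ℓ) * w ℓ) / (2 * n) +
        (∑ ℓ, (a * μ ℓ - b * ν ℓ) * w ℓ) / (2 * n) * (signVec σ u * signVec σ v) -
        if u = v then (a * ∑ ℓ, μ ℓ * w ℓ) / n else 0 := by
  simp only [add_mul, sub_mul, mul_assoc, Finset.sum_add_distrib, Finset.sum_sub_distrib,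
    ← Finset.mul_sum]
  unfold condEW
  by_cases huv : u = v
  · rw [if_pos huv, if_pos huv, huv, signVec_mul_self]
    ring
  · unfold signVec
    cases hu : σ u <;> cases hv : σ v <;> simp [huv] <;> ring

lemma IsSDPFeasible.mInner_condEW (hY : IsSDPFeasible Y) (hn : n ≠ 0) :
    mInner (condEW a b μ ν w σ) Y =
      (∑ ℓ, (a * μ ℓ - b * ν ℓ) * w ℓ) / (2 * n) * (signVec σ ⬝ᵥ Y *ᵥ signVec σ) -
        a * ∑ ℓ, μ ℓ * w ℓ := by
  have hn' : (n : ℝ) ≠ 0 := Nat.cast_ne_zero.2 hn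
  have allOne : ∑ u, ∑ v, Y u v = 0 := by simpa [mInner] using hY.balanced
  have quadratic : signVec σ ⬝ᵥ Y *ᵥ signVec σ =
      ∑ u, ∑ v, signVec σ u * signVec σ v * Y u v := by
    simp only [dotProduct, Matrix.mulVec, Finset.mul_sum]
    exact Finset.sum_congr rfl fun u _ => Finset.sum_congr rfl fun v _ => by ring
  have diagonal : ∑ u, ∑ v, (if u = v then a * (∑ ℓ, μ ℓ * w ℓ) / n else 0) * Y u v =
      a * ∑ ℓ, μ ℓ * w ℓ := by
    simp [ite_mul, hY.diag, mul_div_cancel₀ _ hn']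
  simp only [mInner, condEW_apply_eq, add_mul, sub_mul, Finset.sum_add_distrib,
    Finset.sum_sub_distrib, diagonal, quadratic, mul_assoc, ← Finset.mul_sum, allOne]
  ring

lemma IsSDPMaximizer.mul_sub_le {B : ℝ} (hY : IsSDPMaximizer M Y)
    (hM : InftyOneNormLE (M - condEW a b μ ν w σ) B) (hn : n ≠ 0) {τ : Fin n → Bool}
    (hτ : ∑ u, signVec τ u = 0) :
    (∑ ℓ, (a * μ ℓ - b * ν ℓ) * w ℓ) / (2 * n) *
      ((signVec σ ⬝ᵥ signVec τ) ^ 2 - signVec σ ⬝ᵥ Y *ᵥ signVec σ) ≤ 19 / 3 * B := by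
  have hτ := isSDPFeasible_vecMulVec_signVec hτ
  have optimal := hY.mInner_le _ hτ
  rw [← sub_add_cancel M (condEW a b μ ν w σ), mInner_add_left, mInner_add_left,
    hτ.mInner_condEW hn, hY.mInner_condEW hn, Matrix.vecMulVec_mulVec, op_smul_eq_smul,
    dotProduct_smul, smul_eq_mul, dotProduct_comm (signVec τ), ← pow_two] at optimal
  linarith [hM.mInner_le hY.posSemidef hY.diag, neg_le_mInner_vecMulVec_signVec hM τ]

theorem IsSDPMaximizer.overlap_signR_pos {r : ℝ} (hY : IsSDPMaximizer M Y) (hr : 0 < r)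
    (hgap : 512 * r < ∑ ℓ, (a * μ ℓ - b * ν ℓ) * w ℓ)
    (hM : InftyOneNormLE (M - condEW a b μ ν w σ) (10 * n * r))
    (hσ : |∑ u, signVec σ u| ≤ n / 200) {lam : ℝ} {y : Fin n → ℝ}
    (hy : IsTopEigenpair Y lam y) (hnorm : y ⬝ᵥ y = n) :
    0 < overlap n (signVec σ) (signR y) := by
  rcases n.even_or_odd.symm with hodd | heven
  · exact overlap_pos_of_odd hodd (isSignVec_signVec σ) (isSignVec_signR y)
  rcases n.eq_zero_or_pos with rfl | hn
  · simp [overlap]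
  have hn' : (0 : ℝ) < n := Nat.cast_pos.2 hn
  have trace : Y.trace = n := by simp [Matrix.trace, hY.diag]
  refine LSBM.overlap_signR_pos (isSignVec_signVec σ) <| hy.mul_lt_two_mul_sq_dotProduct
    hY.posSemidef hn' trace (signVec_dotProduct_self σ) hnorm ?_
  obtain ⟨τ, hτ, hστ⟩ := exists_balanced_signVec heven σ
  have optimal := hY.mul_sub_le hM hn.ne' hτ
  have planted : (199 / 200 * n : ℝ) ^ 2 ≤ (signVec σ ⬝ᵥ signVec τ) ^ 2 := by
    gcongr
    linarith
  by_contra! hsmall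
  have signal : 512 * r / (2 * n) * (29 / 100 * n ^ 2) ≤
      (∑ ℓ, (a * μ ℓ - b * ν ℓ) * w ℓ) / (2 * n) *
        ((signVec σ ⬝ᵥ signVec τ) ^ 2 - signVec σ ⬝ᵥ Y *ᵥ signVec σ) := by
    gcongr
    · exact div_nonneg (by linarith) (by positivity)
    · linarith [sq_nonneg (n : ℝ)]
  have cancel : 512 * r / (2 * n) * (29 / 100 * n ^ 2) = 74.24 * (n * r) := by
    field_simp
    norm_num
  linarith [mul_pos hn' hr]

end SDP

/-! ### Conditional expectations in the labeled stochastic block model -/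

lemma sum_mul_exp_sub_mean_le {α : Type*} [Fintype α] {P X : α → ℝ} (hP : IsProbVec P)
    (hX : ∀ i, |X i| ≤ 1) :
    ∑ i, P i * exp (X i - ∑ j, P j * X j) ≤ exp (∑ i, P i * X i ^ 2) := by
  set m := ∑ j, P j * X j
  have exp_le (i : α) : exp (X i) ≤ 1 + X i + X i ^ 2 := by
    linarith [(abs_le.1 (abs_exp_sub_one_sub_id_le (hX i))).2]
  calc ∑ i, P i * exp (X i - m) = (∑ i, P i * exp (X i)) * exp (-m) := by
        simp only [sub_eq_add_neg, exp_add, ← mul_assoc, Finset.sum_mul]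
    _ ≤ (∑ i, P i * (1 + X i + X i ^ 2)) * exp (-m) := by
        gcongr with i
        · exact hP.1 i
        · exact exp_le i
    _ = (m + ∑ i, P i * X i ^ 2 + 1) * exp (-m) := by
        simp only [mul_add, mul_one, Finset.sum_add_distrib, hP.2]
        ring
    _ ≤ exp (m + ∑ i, P i * X i ^ 2) * exp (-m) := by
        gcongr
        exact add_one_le_exp _
    _ = exp (∑ i, P i * X i ^ 2) := by
        rw [← exp_add]
        congr 1
        ring

section SBM

variable [Fintype L] {n : ℕ} {a b : ℝ} {μ ν : L → ℝ} {σ : Fin n → Bool}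

/-- The parameters for which `sbmPairMass n a b μ ν` is a probability distribution. -/
structure IsSBMParam (n : ℕ) (a b : ℝ) (μ ν : L → ℝ) : Prop where
  a_nonneg : 0 ≤ a
  b_nonneg : 0 ≤ b
  a_le : a ≤ n
  b_le : b ≤ n
  isProbVec_same : IsProbVec μ
  isProbVec_diff : IsProbVec ν

lemma isProbVec_sbmPairMass (h : IsSBMParam n a b μ ν) (same : Bool) :
    IsProbVec (sbmPairMass n a b μ ν same) := by
  have a_div_le := div_le_one_of_le₀ h.a_le n.cast_nonneg
  have b_div_le := div_le_one_of_le₀ h.b_le n.cast_nonneg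
  have a_div_nonneg := div_nonneg h.a_nonneg n.cast_nonneg
  have b_div_nonneg := div_nonneg h.b_nonneg n.cast_nonneg
  refine ⟨fun o => ?_, ?_⟩
  · cases same <;> cases o <;>
      simp [sbmPairMass, a_div_le, b_div_le, mul_nonneg, a_div_nonneg, b_div_nonneg,
        h.isProbVec_same.1, h.isProbVec_diff.1]
  · cases same <;>
      simp [Fintype.sum_option, sbmPairMass, ← Finset.mul_sum, h.isProbVec_same.2,
        h.isProbVec_diff.2]

lemma sbmCondExp_prod (f : Pairs n → Option L → ℝ) :
    sbmCondExp n a b μ ν σ (fun E => ∏ p, f p (E p)) =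
      ∏ p : Pairs n, ∑ o, sbmPairMass n a b μ ν (σ p.1.1 == σ p.1.2) o * f p o := by
  classical
  simp only [sbmCondExp, ← Finset.prod_mul_distrib]
  exact (Fintype.prod_sum fun (p : Pairs n) o =>
    sbmPairMass n a b μ ν (σ p.1.1 == σ p.1.2) o * f p o).symm

lemma sbmCondExp_const (h : IsSBMParam n a b μ ν) (c : ℝ) :
    sbmCondExp n a b μ ν σ (fun _ => c) = c := by
  have total : sbmCondExp n a b μ ν σ (fun _ => 1) = 1 := by
    simpa [(isProbVec_sbmPairMass h _).2] using
      sbmCondExp_prod (a := a) (b := b) (μ := μ) (ν := ν) (σ := σ) fun _ _ => 1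
  simp only [sbmCondExp, mul_one] at total
  rw [sbmCondExp, ← Finset.sum_mul, total, one_mul]

lemma sbmCondExp_mul_left (c : ℝ) (f : EdgeConf n L → ℝ) :
    sbmCondExp n a b μ ν σ (fun E => c * f E) = c * sbmCondExp n a b μ ν σ f := by
  simp only [sbmCondExp, Finset.mul_sum, mul_left_comm]

lemma sbmCondExp_mono (h : IsSBMParam n a b μ ν) {f g : EdgeConf n L → ℝ} (hfg : ∀ E, f E ≤ g E) :
    sbmCondExp n a b μ ν σ f ≤ sbmCondExp n a b μ ν σ g :=
  Finset.sum_le_sum fun E _ => mul_le_mul_of_nonneg_left (hfg E) <|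
    Finset.prod_nonneg fun _ _ => (isProbVec_sbmPairMass h _).1 _

lemma sbmCondProb_eq_sbmCondExp (A : Set (EdgeConf n L)) :
    sbmCondProb n a b μ ν σ A = sbmCondExp n a b μ ν σ (A.indicator 1) := by
  classical
  simp only [sbmCondProb, sbmCondExp, Set.indicator_apply, Pi.one_apply, mul_ite, mul_one,
    mul_zero]

lemma sbmCondProb_mono (h : IsSBMParam n a b μ ν) {A B : Set (EdgeConf n L)} (hAB : A ⊆ B) :
    sbmCondProb n a b μ ν σ A ≤ sbmCondProb n a b μ ν σ B := by
  simp only [sbmCondProb_eq_sbmCondExp]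
  exact sbmCondExp_mono h <| Set.indicator_le_indicator_of_subset hAB fun _ => zero_le_one

lemma sbmCondProb_nonneg (h : IsSBMParam n a b μ ν) (A : Set (EdgeConf n L)) :
    0 ≤ sbmCondProb n a b μ ν σ A := by
  simpa [sbmCondProb] using sbmCondProb_mono (σ := σ) h A.empty_subset

lemma sbmCondProb_add_compl (h : IsSBMParam n a b μ ν) (A : Set (EdgeConf n L)) :
    sbmCondProb n a b μ ν σ A + sbmCondProb n a b μ ν σ Aᶜ = 1 := by
  have total := sbmCondExp_const (σ := σ) h 1
  simp only [sbmCondExp, mul_one] at total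
  simp only [sbmCondProb, ← Finset.sum_add_distrib, Set.indicator_self_add_compl_apply, total]

lemma sbmCondProb_iUnion_le (h : IsSBMParam n a b μ ν) {ι : Type*} [Fintype ι]
    (A : ι → Set (EdgeConf n L)) :
    sbmCondProb n a b μ ν σ (⋃ i, A i) ≤ ∑ i, sbmCondProb n a b μ ν σ (A i) := by
  classical
  have linear : ∑ i, sbmCondProb n a b μ ν σ (A i) =
      sbmCondExp n a b μ ν σ fun E => ∑ i, (A i).indicator 1 E := by
    simp only [sbmCondProb_eq_sbmCondExp, sbmCondExp, Finset.mul_sum]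
    exact Finset.sum_comm
  have nonneg (i : ι) (E : EdgeConf n L) : (0 : ℝ) ≤ (A i).indicator 1 E :=
    Set.indicator_nonneg (fun _ _ => zero_le_one) E
  rw [linear, sbmCondProb_eq_sbmCondExp]
  refine sbmCondExp_mono h <| Set.indicator_le' (fun E hE => ?_) fun E _ =>
    Finset.sum_nonneg fun i _ => nonneg i E
  obtain ⟨i, hi⟩ := Set.mem_iUnion.1 hE
  calc (1 : ℝ) = (A i).indicator 1 E := by rw [Set.indicator_of_mem hi, Pi.one_apply]
    _ ≤ ∑ i, (A i).indicator 1 E :=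
      Finset.single_le_sum (fun j _ => nonneg j E) (Finset.mem_univ i)

lemma sbmCondProb_union_le (h : IsSBMParam n a b μ ν) (A B : Set (EdgeConf n L)) :
    sbmCondProb n a b μ ν σ (A ∪ B) ≤ sbmCondProb n a b μ ν σ A + sbmCondProb n a b μ ν σ B := by
  rw [Set.union_eq_iUnion]
  simpa using sbmCondProb_iUnion_le h fun i : Bool => cond i A B

lemma sbmCondProb_le_exp_neg_mul (h : IsSBMParam n a b μ ν) (f : EdgeConf n L → ℝ) (t : ℝ) :
    sbmCondProb n a b μ ν σ {E | t ≤ f E} ≤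
      exp (-t) * sbmCondExp n a b μ ν σ fun E => exp (f E) := by
  rw [sbmCondProb_eq_sbmCondExp, ← sbmCondExp_mul_left]
  refine sbmCondExp_mono h <| Set.indicator_le' (fun E hE => ?_) fun E _ => by positivity
  rw [← exp_add, Pi.one_apply, one_le_exp_iff]
  linarith [Set.mem_ofPred.1 hE]

end SBM

/-! ### Concentration of the weighted adjacency matrix -/

section Noise

variable {n : ℕ} {w w' : L → ℝ}

lemma Wmat_apply (E : EdgeConf n L) (u v : Fin n) : Wmat w E u v = (getLabel E u v).elim 0 w := by
  unfold Wmat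
  cases getLabel E u v <;> rfl

lemma Wmat_add (E : EdgeConf n L) : Wmat (w + w') E = Wmat w E + Wmat w' E := by
  ext u v
  simp only [Matrix.add_apply, Wmat_apply]
  cases getLabel E u v <;> simp

lemma Wmat_abs_apply (E : EdgeConf n L) (u v : Fin n) : Wmat |w| E u v = |Wmat w E u v| := by
  simp only [Wmat_apply]
  cases getLabel E u v <;> simp

lemma Wmat_apply_self (E : EdgeConf n L) (u : Fin n) : Wmat w E u u = 0 := by
  simp [Wmat_apply, getLabel]

lemma Wmat_apply_of_lt (E : EdgeConf n L) {u v : Fin n} (huv : u < v) :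
    Wmat w E u v = (E ⟨(u, v), huv⟩).elim 0 w := by
  rw [Wmat_apply, getLabel, dif_pos huv]

lemma Wmat_apply_comm (E : EdgeConf n L) (u v : Fin n) : Wmat w E u v = Wmat w E v u := by
  simp only [Wmat_apply, getLabel]
  rcases lt_trichotomy u v with h | rfl | h <;> simp [*, LT.lt.not_gt]

variable [Fintype L] {a b : ℝ} {μ ν : L → ℝ} {σ : Fin n → Bool}

/-- `W - E[W | σ]`. -/
noncomputable def noise (a b : ℝ) (μ ν w : L → ℝ) (σ : Fin n → Bool) (E : EdgeConf n L) :
    Matrix (Fin n) (Fin n) ℝ :=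
  Wmat w E - condEW a b μ ν w σ

/-- The integral of `f` against `aμ + bν`. Divided by `n`, it bounds for `0 ≤ f` the conditional
mean of the contribution of one pair of vertices to a sum of `f` over the edges. -/
noncomputable def edgeMoment (a b : ℝ) (μ ν f : L → ℝ) : ℝ := ∑ ℓ, (a * μ ℓ + b * ν ℓ) * f ℓ

lemma condEW_add : condEW a b μ ν (w + w') σ = condEW a b μ ν w σ + condEW a b μ ν w' σ := by
  ext u v
  simp only [condEW, Matrix.add_apply, Pi.add_apply, mul_add, Finset.sum_add_distrib]
  split_ifs <;> ring

lemma condEW_apply_comm (u v : Fin n) : condEW a b μ ν w σ u v = condEW a b μ ν w σ v u := by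
  simp only [condEW, eq_comm]

lemma condEW_apply_self (u : Fin n) : condEW a b μ ν w σ u u = 0 := if_pos rfl

lemma sum_sbmPairMass_mul_elim {u v : Fin n} (huv : u ≠ v) (f : L → ℝ) :
    ∑ o, sbmPairMass n a b μ ν (σ u == σ v) o * o.elim 0 f = condEW a b μ ν f σ u v := by
  rw [condEW, if_neg huv, Fintype.sum_option]
  by_cases h : σ u = σ v <;> simp [sbmPairMass, h, Finset.mul_sum, mul_assoc]

lemma edgeMoment_mono (ha : 0 ≤ a) (hb : 0 ≤ b) (hμ : IsProbVec μ) (hν : IsProbVec ν)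
    {f g : L → ℝ} (hfg : ∀ ℓ, f ℓ ≤ g ℓ) : edgeMoment a b μ ν f ≤ edgeMoment a b μ ν g :=
  Finset.sum_le_sum fun ℓ _ => mul_le_mul_of_nonneg_left (hfg ℓ) <|
    add_nonneg (mul_nonneg ha (hμ.1 ℓ)) (mul_nonneg hb (hν.1 ℓ))

lemma edgeMoment_nonneg (ha : 0 ≤ a) (hb : 0 ≤ b) (hμ : IsProbVec μ) (hν : IsProbVec ν)
    {f : L → ℝ} (hf : ∀ ℓ, 0 ≤ f ℓ) : 0 ≤ edgeMoment a b μ ν f := by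
  simpa [edgeMoment] using edgeMoment_mono ha hb hμ hν (f := 0) hf

lemma edgeMoment_mul_left (c : ℝ) (f : L → ℝ) :
    edgeMoment a b μ ν (fun ℓ => c * f ℓ) = c * edgeMoment a b μ ν f := by
  simp only [edgeMoment, Finset.mul_sum, mul_left_comm]

lemma condEW_le (h : IsSBMParam n a b μ ν) (hw : ∀ ℓ, 0 ≤ w ℓ) (u v : Fin n) :
    condEW a b μ ν w σ u v ≤ edgeMoment a b μ ν w / n := by
  have ha : 0 ≤ a * ∑ ℓ, μ ℓ * w ℓ :=
    mul_nonneg h.a_nonneg (Finset.sum_nonneg fun ℓ _ => mul_nonneg (h.isProbVec_same.1 ℓ) (hw ℓ))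
  have hb : 0 ≤ b * ∑ ℓ, ν ℓ * w ℓ :=
    mul_nonneg h.b_nonneg (Finset.sum_nonneg fun ℓ _ => mul_nonneg (h.isProbVec_diff.1 ℓ) (hw ℓ))
  have split : edgeMoment a b μ ν w = a * ∑ ℓ, μ ℓ * w ℓ + b * ∑ ℓ, ν ℓ * w ℓ := by
    simp only [edgeMoment, add_mul, mul_assoc, Finset.sum_add_distrib, Finset.mul_sum]
  rw [split, condEW, div_mul_eq_mul_div, div_mul_eq_mul_div]
  split_ifs
  · positivity
  · gcongr
    linarith
  · gcongr
    linarith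

lemma abs_condEW_apply_le (h : IsSBMParam n a b μ ν) (u v : Fin n) :
    |condEW a b μ ν w σ u v| ≤ condEW a b μ ν |w| σ u v := by
  have abs_sum_le {P : L → ℝ} (hP : IsProbVec P) : |∑ ℓ, P ℓ * w ℓ| ≤ ∑ ℓ, P ℓ * |w| ℓ := by
    refine (Finset.abs_sum_le_sum_abs _ _).trans_eq (Finset.sum_congr rfl fun ℓ _ => ?_)
    rw [abs_mul, abs_of_nonneg (hP.1 ℓ), Pi.abs_apply]
  unfold condEW
  split_ifs
  · rw [abs_zero]
  · rw [abs_mul, abs_of_nonneg (div_nonneg h.a_nonneg n.cast_nonneg)]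
    exact mul_le_mul_of_nonneg_left (abs_sum_le h.isProbVec_same)
      (div_nonneg h.a_nonneg n.cast_nonneg)
  · rw [abs_mul, abs_of_nonneg (div_nonneg h.b_nonneg n.cast_nonneg)]
    exact mul_le_mul_of_nonneg_left (abs_sum_le h.isProbVec_diff)
      (div_nonneg h.b_nonneg n.cast_nonneg)

lemma noise_add (E : EdgeConf n L) :
    noise a b μ ν (w + w') σ E = noise a b μ ν w σ E + noise a b μ ν w' σ E := by
  rw [noise, Wmat_add, condEW_add, add_sub_add_comm, noise, noise]

lemma sum_sum_eq_sum_pairs {f : Fin n → Fin n → ℝ} (hf : ∀ u, f u u = 0) :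
    ∑ u, ∑ v, f u v = ∑ p : Pairs n, (f p.1.1 p.1.2 + f p.1.2 p.1.1) := by
  have sum_pairs (g : Fin n → Fin n → ℝ) :
      ∑ p : Pairs n, g p.1.1 p.1.2 = ∑ u, ∑ v, if u < v then g u v else 0 := by
    rw [← Fintype.sum_prod_type', ← Finset.sum_filter]
    exact (Finset.sum_subtype _ (by simp) fun p : Fin n × Fin n => g p.1 p.2).symm
  rw [Finset.sum_add_distrib, sum_pairs f, sum_pairs fun u v => f v u,
    Finset.sum_comm (f := fun u v => if u < v then f v u else 0)]
  simp only [← Finset.sum_add_distrib]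
  refine Finset.sum_congr rfl fun u _ => Finset.sum_congr rfl fun v _ => ?_
  rcases lt_trichotomy u v with h | rfl | h
  · simp [h, h.not_gt]
  · simp [hf]
  · simp [h, h.not_gt]

lemma card_pairs_le : (Fintype.card (Pairs n) : ℝ) ≤ n ^ 2 / 2 := by
  have offDiag := sum_sum_eq_sum_pairs (n := n) (f := fun u v => if u = v then 0 else 1) (by simp)
  have pair_eq (p : Pairs n) :
      (if p.1.1 = p.1.2 then (0 : ℝ) else 1) + (if p.1.2 = p.1.1 then 0 else 1) = 2 := by
    rw [if_neg p.2.ne, if_neg p.2.ne']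
    norm_num
  have le : ∑ u : Fin n, ∑ v : Fin n, (if u = v then (0 : ℝ) else 1) ≤
      ∑ u : Fin n, ∑ v : Fin n, 1 := by
    gcongr
    split_ifs <;> norm_num
  simp only [offDiag, pair_eq, Finset.sum_const, Finset.card_univ, Fintype.card_fin,
    nsmul_eq_mul] at le
  linarith

lemma noise_apply_of_lt (E : EdgeConf n L) {u v : Fin n} (huv : u < v) :
    noise a b μ ν w σ E u v = (E ⟨(u, v), huv⟩).elim 0 w - condEW a b μ ν w σ u v := by
  rw [noise, Matrix.sub_apply, Wmat_apply_of_lt E huv]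

lemma sum_sum_noise_mul (E : EdgeConf n L) (c : Fin n → Fin n → ℝ) :
    ∑ u, ∑ v, noise a b μ ν w σ E u v * c u v =
      ∑ p : Pairs n, (c p.1.1 p.1.2 + c p.1.2 p.1.1) *
        ((E p).elim 0 w - condEW a b μ ν w σ p.1.1 p.1.2) := by
  rw [sum_sum_eq_sum_pairs fun u => by
    rw [noise, Matrix.sub_apply, Wmat_apply_self, condEW_apply_self, sub_zero, zero_mul]]
  refine Finset.sum_congr rfl fun p _ => ?_
  have comm : noise a b μ ν w σ E p.1.2 p.1.1 = noise a b μ ν w σ E p.1.1 p.1.2 := by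
    rw [noise, Matrix.sub_apply, Matrix.sub_apply, Wmat_apply_comm, condEW_apply_comm]
  rw [comm, noise_apply_of_lt E p.2]
  ring

lemma sum_sbmPairMass_mul_exp_le (h : IsSBMParam n a b μ ν) {u v : Fin n} (huv : u ≠ v) {c K : ℝ}
    (hc : |c| ≤ K) (hw : ∀ ℓ, K * |w ℓ| ≤ 1) :
    ∑ o, sbmPairMass n a b μ ν (σ u == σ v) o *
        exp (c * (o.elim 0 w - condEW a b μ ν w σ u v)) ≤
      exp (K ^ 2 * (edgeMoment a b μ ν (fun ℓ => w ℓ ^ 2) / n)) := by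
  have bounded (o : Option L) : |c * o.elim 0 w| ≤ 1 := by
    cases o with
    | none => simp
    | some ℓ =>
      rw [abs_mul]
      exact (mul_le_mul_of_nonneg_right hc (abs_nonneg _)).trans (hw ℓ)
  have mgf := sum_mul_exp_sub_mean_le (isProbVec_sbmPairMass h (σ u == σ v)) bounded
  have elim_sq (o : Option L) : o.elim 0 w ^ 2 = o.elim 0 fun ℓ => w ℓ ^ 2 := by
    cases o <;> simp
  simp only [mul_left_comm _ c, mul_pow, mul_left_comm _ (c ^ 2), ← Finset.mul_sum, elim_sq,
    sum_sbmPairMass_mul_elim huv, ← mul_sub] at mgf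
  refine mgf.trans (exp_le_exp.2 ?_)
  have second_moment := condEW_le (w := fun ℓ => w ℓ ^ 2) (σ := σ) h (fun ℓ => sq_nonneg _) u v
  have edgeMoment_nonneg := edgeMoment_nonneg h.a_nonneg h.b_nonneg h.isProbVec_same
    h.isProbVec_diff (f := fun ℓ => w ℓ ^ 2) fun ℓ => sq_nonneg _
  have sq_le : c ^ 2 ≤ K ^ 2 := sq_le_sq.2 (hc.trans (le_abs_self K))
  calc c ^ 2 * condEW a b μ ν (fun ℓ => w ℓ ^ 2) σ u v
      ≤ c ^ 2 * (edgeMoment a b μ ν (fun ℓ => w ℓ ^ 2) / n) := by gcongr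
    _ ≤ K ^ 2 * (edgeMoment a b μ ν (fun ℓ => w ℓ ^ 2) / n) := by gcongr

lemma sbmCondExp_exp_sum_noise_mul_le (h : IsSBMParam n a b μ ν) {c : Fin n → Fin n → ℝ} {K : ℝ}
    (hc : ∀ u v, |c u v| ≤ K) (hw : ∀ ℓ, 2 * K * |w ℓ| ≤ 1) :
    sbmCondExp n a b μ ν σ (fun E => exp (∑ u, ∑ v, noise a b μ ν w σ E u v * c u v)) ≤
      exp (2 * K ^ 2 * edgeMoment a b μ ν (fun ℓ => w ℓ ^ 2) * n) := by
  set S := edgeMoment a b μ ν fun ℓ => w ℓ ^ 2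
  have S_nonneg : 0 ≤ S := edgeMoment_nonneg h.a_nonneg h.b_nonneg h.isProbVec_same
    h.isProbVec_diff fun ℓ => sq_nonneg _
  have pair_le (p : Pairs n) : |c p.1.1 p.1.2 + c p.1.2 p.1.1| ≤ 2 * K := by
    linarith [abs_add_le (c p.1.1 p.1.2) (c p.1.2 p.1.1), hc p.1.1 p.1.2, hc p.1.2 p.1.1]
  simp only [sum_sum_noise_mul, exp_sum]
  rw [sbmCondExp_prod fun p o => exp ((c p.1.1 p.1.2 + c p.1.2 p.1.1) *
    (o.elim 0 w - condEW a b μ ν w σ p.1.1 p.1.2))]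
  calc _ ≤ ∏ _ : Pairs n, exp ((2 * K) ^ 2 * (S / n)) :=
        Finset.prod_le_prod
          (fun p _ => Finset.sum_nonneg fun o _ =>
            mul_nonneg ((isProbVec_sbmPairMass h _).1 o) (exp_pos _).le)
          fun p _ => sum_sbmPairMass_mul_exp_le h p.2.ne (pair_le p) hw
    _ = exp (Fintype.card (Pairs n) * ((2 * K) ^ 2 * (S / n))) := by
        rw [Finset.prod_const, Finset.card_univ, ← exp_nat_mul]
    _ ≤ exp (n ^ 2 / 2 * ((2 * K) ^ 2 * (S / n))) := by
        gcongr
        exact card_pairs_le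
    _ = exp (2 * K ^ 2 * S * n) := by
        congr 1
        rcases eq_or_ne (n : ℝ) 0 with hn | hn
        · simp [hn]
        · field_simp

lemma sbmCondProb_lt_sum_noise_mul_le (h : IsSBMParam n a b μ ν) {c : Fin n → Fin n → ℝ} {K : ℝ}
    (hK : 0 ≤ K) (hc : ∀ u v, |c u v| ≤ 1) (hw : ∀ ℓ, 2 * K * |w ℓ| ≤ 1) (t : ℝ) :
    sbmCondProb n a b μ ν σ {E | t < ∑ u, ∑ v, noise a b μ ν w σ E u v * c u v} ≤
      exp (2 * K ^ 2 * edgeMoment a b μ ν (fun ℓ => w ℓ ^ 2) * n - K * t) := by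
  have scaled_subset : {E : EdgeConf n L | t < ∑ u, ∑ v, noise a b μ ν w σ E u v * c u v} ⊆
      {E | K * t ≤ ∑ u, ∑ v, noise a b μ ν w σ E u v * (K * c u v)} := fun E hE => by
    simp only [Set.mem_ofPred_eq, mul_left_comm _ K, ← Finset.mul_sum] at hE ⊢
    exact mul_le_mul_of_nonneg_left hE.le hK
  have scaled_le (u v : Fin n) : |K * c u v| ≤ K := by
    rw [abs_mul, abs_of_nonneg hK]
    exact mul_le_of_le_one_right hK (hc u v)
  calc _ ≤ exp (-(K * t)) * sbmCondExp n a b μ ν σ (fun E =>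
          exp (∑ u, ∑ v, noise a b μ ν w σ E u v * (K * c u v))) :=
        (sbmCondProb_mono h scaled_subset).trans (sbmCondProb_le_exp_neg_mul h _ _)
    _ ≤ exp (-(K * t)) * exp (2 * K ^ 2 * edgeMoment a b μ ν (fun ℓ => w ℓ ^ 2) * n) := by
        gcongr
        exact sbmCondExp_exp_sum_noise_mul_le h scaled_le hw
    _ = _ := by rw [← exp_add, neg_add_eq_sub]

lemma sbmCondProb_not_inftyOneNormLE_le (h : IsSBMParam n a b μ ν) {K : ℝ} (hK : 0 ≤ K)
    (hw : ∀ ℓ, 2 * K * |w ℓ| ≤ 1) (B : ℝ) :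
    sbmCondProb n a b μ ν σ {E | ¬InftyOneNormLE (noise a b μ ν w σ E) B} ≤
      4 ^ n * exp (2 * K ^ 2 * edgeMoment a b μ ν (fun ℓ => w ℓ ^ 2) * n - K * B) := by
  have subset : {E : EdgeConf n L | ¬InftyOneNormLE (noise a b μ ν w σ E) B} ⊆
      ⋃ x : (Fin n → Bool) × (Fin n → Bool), {E | B < ∑ u, ∑ v,
        noise a b μ ν w σ E u v * (signVec x.1 u * signVec x.2 v)} := fun E hE => by
    by_contra hnot
    simp only [Set.mem_iUnion, Set.mem_ofPred_eq, not_exists, not_lt] at hnot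
    exact hE (inftyOneNormLE_of_signVec fun x y => hnot (x, y))
  have abs_le (x : (Fin n → Bool) × (Fin n → Bool)) (u v : Fin n) :
      |signVec x.1 u * signVec x.2 v| ≤ 1 := by
    rw [abs_mul, abs_signVec, abs_signVec, one_mul]
  calc _ ≤ ∑ _ : (Fin n → Bool) × (Fin n → Bool),
          exp (2 * K ^ 2 * edgeMoment a b μ ν (fun ℓ => w ℓ ^ 2) * n - K * B) :=
        (sbmCondProb_mono h subset).trans <| (sbmCondProb_iUnion_le h _).trans <|
          Finset.sum_le_sum fun x _ => sbmCondProb_lt_sum_noise_mul_le h hK (abs_le x) hw B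
    _ = _ := by
        norm_num [← mul_pow]

lemma inftyOneNormLE_noise (h : IsSBMParam n a b μ ν) {E : EdgeConf n L} {B : ℝ}
    (hB : ∑ u, ∑ v, noise a b μ ν |w| σ E u v ≤ B) :
    InftyOneNormLE (noise a b μ ν w σ E) (B + 2 * n * edgeMoment a b μ ν |w|) := by
  have abs_le (u v : Fin n) : |noise a b μ ν w σ E u v| ≤
      noise a b μ ν |w| σ E u v + 2 * (edgeMoment a b μ ν |w| / n) := by
    have mean_le := condEW_le (w := |w|) (σ := σ) h (fun ℓ => abs_nonneg (w ℓ)) u v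
    have triangle := abs_sub (Wmat w E u v) (condEW a b μ ν w σ u v)
    simp only [noise, Matrix.sub_apply, Wmat_abs_apply]
    linarith [abs_condEW_apply_le (w := w) (σ := σ) h u v]
  refine inftyOneNormLE_of_sum_abs_le ?_
  calc _ ≤ ∑ u, ∑ v, (noise a b μ ν |w| σ E u v + 2 * (edgeMoment a b μ ν |w| / n)) := by
        gcongr
        exact abs_le _ _
    _ = ∑ u, ∑ v, noise a b μ ν |w| σ E u v + 2 * n * edgeMoment a b μ ν |w| := by
        simp only [Finset.sum_add_distrib, Finset.sum_const, Finset.card_univ, Fintype.card_fin,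
          nsmul_eq_mul]
        rcases eq_or_ne (n : ℝ) 0 with hn | _
        · simp [hn]
        · field_simp
    _ ≤ _ := by gcongr

lemma sbmCondProb_not_inftyOneNormLE_add_le (h : IsSBMParam n a b μ ν) {K : ℝ} (hK : 0 ≤ K)
    (hw : ∀ ℓ, 2 * K * |w ℓ| ≤ 1) (B : ℝ) :
    sbmCondProb n a b μ ν σ
        {E | ¬InftyOneNormLE (noise a b μ ν w σ E) (B + 2 * n * edgeMoment a b μ ν |w|)} ≤
      exp (2 * K ^ 2 * edgeMoment a b μ ν (fun ℓ => w ℓ ^ 2) * n - K * B) := by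
  have subset : {E : EdgeConf n L |
        ¬InftyOneNormLE (noise a b μ ν w σ E) (B + 2 * n * edgeMoment a b μ ν |w|)} ⊆
      {E | B < ∑ u, ∑ v, noise a b μ ν |w| σ E u v * 1} := fun E hE => by
    simp only [Set.mem_ofPred_eq, mul_one]
    by_contra! hsmall
    exact hE (inftyOneNormLE_noise h hsmall)
  refine (sbmCondProb_mono h subset).trans ?_
  simpa only [Pi.abs_apply, sq_abs] using
    sbmCondProb_lt_sum_noise_mul_le (w := |w|) (σ := σ) h hK (fun _ _ => abs_one.le)
      (by simpa only [Pi.abs_apply, abs_abs] using hw) B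

end Noise

section Concentration

variable [Fintype L] {a b : ℝ} {μ ν w : L → ℝ} {θ r : ℝ}

lemma sbmCondProb_not_inftyOneNormLE_le_of_light {n : ℕ} {σ : Fin n → Bool}
    (h : IsSBMParam n a b μ ν) (hθ : 0 ≤ θ) (hw : ∀ ℓ, 2 * θ * |w ℓ| ≤ 1)
    (hS : θ * edgeMoment a b μ ν (fun ℓ => w ℓ ^ 2) ≤ r) (hr : θ * r = log 2) :
    sbmCondProb n a b μ ν σ {E | ¬InftyOneNormLE (noise a b μ ν w σ E) (5 * n * r)} ≤
      (1 / 2) ^ n := by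
  refine (sbmCondProb_not_inftyOneNormLE_le h hθ hw _).trans ?_
  set S := edgeMoment a b μ ν fun ℓ => w ℓ ^ 2
  have exponent_le : 2 * θ ^ 2 * S * n - θ * (5 * n * r) ≤ n * -(3 * log 2) := by
    have : n * (θ * (θ * S)) ≤ n * (θ * r) := by gcongr
    rw [← hr]
    linarith
  have exp_eq : exp (-(3 * log 2)) = 1 / 8 := by
    rw [exp_neg, mul_comm, exp_mul, exp_log two_pos]
    norm_num
  calc (4 : ℝ) ^ n * exp (2 * θ ^ 2 * S * n - θ * (5 * n * r))
      ≤ 4 ^ n * exp (n * -(3 * log 2)) := by gcongr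
    _ = (1 / 2) ^ n := by
        rw [exp_nat_mul, exp_eq, ← mul_pow]
        norm_num

lemma exists_sbmCondProb_not_inftyOneNormLE_le_of_heavy (ha : 0 ≤ a) (hb : 0 ≤ b)
    (hμ : IsProbVec μ) (hν : IsProbVec ν) (hw : ∀ ℓ, |w ℓ| ≤ 2 * θ * w ℓ ^ 2)
    (hS : θ * edgeMoment a b μ ν (fun ℓ => w ℓ ^ 2) ≤ r) (hr : 0 < r) :
    ∃ q ∈ Set.Ico (0 : ℝ) 1, ∀ (n : ℕ) (σ : Fin n → Bool), IsSBMParam n a b μ ν →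
      sbmCondProb n a b μ ν σ {E | ¬InftyOneNormLE (noise a b μ ν w σ E) (5 * n * r)} ≤ q ^ n := by
  set S := edgeMoment a b μ ν fun ℓ => w ℓ ^ 2
  have S_nonneg : 0 ≤ S := edgeMoment_nonneg ha hb hμ hν fun ℓ => sq_nonneg _
  have mean_le : edgeMoment a b μ ν |w| ≤ 2 * r := by
    have := edgeMoment_mono ha hb hμ hν hw
    rw [edgeMoment_mul_left, mul_assoc] at this
    exact this.trans (by linarith)
  have abs_le (ℓ : L) : |w ℓ| ≤ ∑ ℓ, |w ℓ| :=
    Finset.single_le_sum (f := fun ℓ => |w ℓ|) (fun _ _ => abs_nonneg _) (Finset.mem_univ ℓ)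
  have C_nonneg : 0 ≤ ∑ ℓ, |w ℓ| := Finset.sum_nonneg fun _ _ => abs_nonneg _
  obtain ⟨t, ht, htw, htS⟩ : ∃ t > 0, (∀ ℓ, 2 * t * |w ℓ| ≤ 1) ∧ 4 * t * S ≤ r := by
    have pos : 0 < 2 * ∑ ℓ, |w ℓ| + 4 * S / r + 1 := by positivity
    refine ⟨(2 * ∑ ℓ, |w ℓ| + 4 * S / r + 1)⁻¹, inv_pos.2 pos, fun ℓ => ?_, ?_⟩
    · rw [mul_right_comm, mul_inv_le_iff₀ pos]
      have : 0 ≤ 4 * S / r := by positivity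
      linarith [abs_le ℓ]
    · rw [mul_right_comm, mul_inv_le_iff₀ pos, ← div_le_iff₀' hr]
      linarith
  refine ⟨exp (-(t * r / 2)), ⟨(exp_pos _).le, exp_lt_one_iff.2 (by linarith [mul_pos ht hr])⟩,
    fun n σ h => ?_⟩
  have subset : {E : EdgeConf n L | ¬InftyOneNormLE (noise a b μ ν w σ E) (5 * n * r)} ⊆
      {E | ¬InftyOneNormLE (noise a b μ ν w σ E) (n * r + 2 * n * edgeMoment a b μ ν |w|)} := by
    refine fun E => mt fun hE x y hx hy => (hE x y hx hy).trans ?_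
    have : n * edgeMoment a b μ ν |w| ≤ n * (2 * r) := by gcongr
    linarith
  refine (sbmCondProb_mono h subset).trans <|
    (sbmCondProb_not_inftyOneNormLE_add_le h ht.le htw _).trans ?_
  rw [← exp_nat_mul, exp_le_exp]
  have : n * t * (4 * t * S) ≤ n * t * r := by gcongr
  linarith

/-- The weights are split at the threshold `1 / (2θ)`: the light part has the exponential moments
needed for a union bound over all pairs of sign vectors, and the heavy part has such a small
first absolute moment that its entries can be summed in absolute value. -/
theorem exists_sbmCondProb_not_inftyOneNormLE_le (ha : 0 ≤ a) (hb : 0 ≤ b)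
    (hμ : IsProbVec μ) (hν : IsProbVec ν) (hθ : 0 ≤ θ) (hr : 0 < r)
    (hS : θ * edgeMoment a b μ ν (fun ℓ => w ℓ ^ 2) ≤ r) (hθr : θ * r = log 2) :
    ∃ q ∈ Set.Ico (0 : ℝ) 1, ∀ (n : ℕ) (σ : Fin n → Bool), IsSBMParam n a b μ ν →
      sbmCondProb n a b μ ν σ {E | ¬InftyOneNormLE (noise a b μ ν w σ E) (10 * n * r)} ≤
        (1 / 2) ^ n + q ^ n := by
  set T : Set L := {ℓ | 2 * θ * |w ℓ| ≤ 1}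
  have moment_le (A : Set L) :
      θ * edgeMoment a b μ ν (fun ℓ => A.indicator w ℓ ^ 2) ≤ r := by
    refine le_trans ?_ hS
    gcongr
    refine edgeMoment_mono ha hb hμ hν fun ℓ => ?_
    by_cases hℓ : ℓ ∈ A <;> simp [hℓ, sq_nonneg]
  have light (ℓ : L) : 2 * θ * |T.indicator w ℓ| ≤ 1 := by
    by_cases hℓ : ℓ ∈ T
    · rw [Set.indicator_of_mem hℓ]
      exact hℓ
    · simp [hℓ]
  have heavy (ℓ : L) : |Tᶜ.indicator w ℓ| ≤ 2 * θ * Tᶜ.indicator w ℓ ^ 2 := by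
    by_cases hℓ : ℓ ∈ T
    · simp [hℓ]
    · rw [Set.indicator_of_mem (Set.mem_compl hℓ), ← sq_abs, pow_two, ← mul_assoc]
      exact le_mul_of_one_le_left (abs_nonneg _) (not_le.1 hℓ).le
  obtain ⟨q, hq, heavy_le⟩ :=
    exists_sbmCondProb_not_inftyOneNormLE_le_of_heavy ha hb hμ hν heavy (moment_le _) hr
  refine ⟨q, hq, fun n σ h => ?_⟩
  have subset : {E : EdgeConf n L | ¬InftyOneNormLE (noise a b μ ν w σ E) (10 * n * r)} ⊆
      {E | ¬InftyOneNormLE (noise a b μ ν (T.indicator w) σ E) (5 * n * r)} ∪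
        {E | ¬InftyOneNormLE (noise a b μ ν (Tᶜ.indicator w) σ E) (5 * n * r)} := by
    intro E hE
    by_contra! hnot
    simp only [Set.mem_union, Set.mem_ofPred_eq, not_or, not_not] at hnot hE
    refine hE ?_
    rw [← Set.indicator_self_add_compl T w, noise_add]
    convert hnot.1.add hnot.2 using 1
    ring
  exact (sbmCondProb_mono h subset).trans <| (sbmCondProb_union_le h _ _).trans <|
    add_le_add (sbmCondProb_not_inftyOneNormLE_le_of_light h hθ light (moment_le T) hθr)
      (heavy_le n σ h)

end Concentration

section Joint

variable [Fintype L] {n : ℕ} {a b : ℝ} {μ ν : L → ℝ}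

lemma sbmProb_eq_sum_sbmCondProb (A : Set ((Fin n → Bool) × EdgeConf n L)) :
    sbmProb n a b μ ν A =
      (1 / 2) ^ n * ∑ σ, sbmCondProb n a b μ ν σ {E | (σ, E) ∈ A} := by
  classical
  simp only [sbmProb, sbmCondProb, Fintype.sum_prod_type, Finset.mul_sum, Set.indicator_apply,
    sbmMass, mul_ite, mul_zero, Set.mem_ofPred_eq]

lemma sbmCondProb_le_one (h : IsSBMParam n a b μ ν) (σ : Fin n → Bool) (A : Set (EdgeConf n L)) :
    sbmCondProb n a b μ ν σ A ≤ 1 := by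
  linarith [sbmCondProb_add_compl (σ := σ) h A, sbmCondProb_nonneg (σ := σ) h Aᶜ]

lemma half_pow_mul_sum_const (c : ℝ) : (1 / 2) ^ n * ∑ _ : Fin n → Bool, c = c := by
  simp

lemma sbmProb_le_one (h : IsSBMParam n a b μ ν) (A : Set ((Fin n → Bool) × EdgeConf n L)) :
    sbmProb n a b μ ν A ≤ 1 := by
  rw [sbmProb_eq_sum_sbmCondProb]
  refine le_of_le_of_eq ?_ (half_pow_mul_sum_const (n := n) 1)
  gcongr with σ
  exact sbmCondProb_le_one h σ _

lemma one_sub_le_sbmProb (h : IsSBMParam n a b μ ν) (hn : n ≠ 0) {δ q : ℝ} (hδ : 0 < δ)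
    {bad : (Fin n → Bool) → Set (EdgeConf n L)} (hbad : ∀ σ, sbmCondProb n a b μ ν σ (bad σ) ≤ q)
    {A : Set ((Fin n → Bool) × EdgeConf n L)}
    (hA : ∀ σ, |∑ u, signVec σ u| ≤ n * δ → ∀ E, E ∉ bad σ → (σ, E) ∈ A) :
    1 - ((δ ^ 2)⁻¹ / n + q) ≤ sbmProb n a b μ ν A := by
  have : (0 : ℝ) < n := Nat.cast_pos.2 hn.pos
  have cond_le (σ : Fin n → Bool) :
      1 - (∑ u, signVec σ u) ^ 2 / (n * δ) ^ 2 - q ≤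
        sbmCondProb n a b μ ν σ {E | (σ, E) ∈ A} := by
    have q_nonneg := (sbmCondProb_nonneg h (bad σ)).trans (hbad σ)
    rcases le_or_gt |∑ u, signVec σ u| (n * δ) with hσ | hσ
    · have mono := sbmCondProb_mono (σ := σ) h fun E hE => hA σ hσ E hE
      have compl := sbmCondProb_add_compl (σ := σ) h (bad σ)
      have : 0 ≤ (∑ u, signVec σ u) ^ 2 / (n * δ) ^ 2 := by positivity
      calc _ ≤ sbmCondProb n a b μ ν σ (bad σ)ᶜ := by linarith [hbad σ]
        _ ≤ _ := mono
    · have : 1 ≤ (∑ u, signVec σ u) ^ 2 / (n * δ) ^ 2 := by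
        rw [one_le_div (by positivity), ← sq_abs (∑ u, signVec σ u)]
        gcongr
      linarith [sbmCondProb_nonneg (σ := σ) h {E | (σ, E) ∈ A}]
  have average : (1 / 2) ^ n * ∑ σ : Fin n → Bool,
      (1 - (∑ u, signVec σ u) ^ 2 / (n * δ) ^ 2 - q) = 1 - ((δ ^ 2)⁻¹ / n + q) := by
    have cancel : (1 / 2 : ℝ) ^ n * (2 ^ n * n / (n * δ) ^ 2) = n / (n * δ) ^ 2 := by
      rw [mul_div_assoc, ← mul_assoc, ← mul_pow, one_div_mul_cancel two_ne_zero, one_pow, one_mul]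
    simp only [Finset.sum_sub_distrib, ← Finset.sum_div, sum_sq_sum_signVec, mul_sub,
      half_pow_mul_sum_const, cancel]
    field_simp
    ring
  rw [sbmProb_eq_sum_sbmCondProb, ← average]
  gcongr with σ
  exact cond_le σ

end Joint

section Asymptotics

variable [Fintype L] {a b : ℝ} {μ ν w : L → ℝ}

lemma eventually_isSBMParam (ha : 0 ≤ a) (hb : 0 ≤ b) (hμ : IsProbVec μ) (hν : IsProbVec ν) :
    ∀ᶠ n : ℕ in atTop, IsSBMParam n a b μ ν := by
  have le (c : ℝ) : ∀ᶠ n : ℕ in atTop, c ≤ n := tendsto_natCast_atTop_atTop.eventually_ge_atTop c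
  filter_upwards [le a, le b] with n ha_le hb_le using ⟨ha, hb, ha_le, hb_le, hμ, hν⟩

theorem exists_signal_gt_and_noise_bound (ha : 0 ≤ a) (hb : 0 ≤ b)
    (hμ : IsProbVec μ) (hν : IsProbVec ν) {c : ℝ} (hc : 0 ≤ c)
    (hgap : c * √(log 2) < (∑ ℓ, (a * μ ℓ - b * ν ℓ) * w ℓ) /
      √(edgeMoment a b μ ν fun ℓ => w ℓ ^ 2)) :
    ∃ r > 0, c * r < ∑ ℓ, (a * μ ℓ - b * ν ℓ) * w ℓ ∧
      ∃ q ∈ Set.Ico (0 : ℝ) 1, ∀ (n : ℕ) (σ : Fin n → Bool), IsSBMParam n a b μ ν →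
        sbmCondProb n a b μ ν σ {E | ¬InftyOneNormLE (noise a b μ ν w σ E) (10 * n * r)} ≤
          (1 / 2) ^ n + q ^ n := by
  have log_two_pos : 0 < log 2 := log_pos one_lt_two
  set S := edgeMoment a b μ ν fun ℓ => w ℓ ^ 2 with S_def
  have S_pos : 0 < S := by
    by_contra! S_nonpos
    rw [sqrt_eq_zero_of_nonpos S_nonpos, div_zero] at hgap
    exact hgap.not_ge (by positivity)
  have sqrt_S_pos : 0 < √S := sqrt_pos.2 S_pos
  refine ⟨√S * √(log 2), by positivity, ?_, ?_⟩
  · rw [lt_div_iff₀ sqrt_S_pos] at hgap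
    linarith
  · refine exists_sbmCondProb_not_inftyOneNormLE_le ha hb hμ hν
      (θ := √(log 2) / √S) (by positivity) (by positivity) ?_ ?_
    · rw [← S_def, div_mul_comm, div_sqrt]
    · rw [← mul_assoc, div_mul_cancel₀ _ sqrt_S_pos.ne', mul_self_sqrt log_two_pos.le]

lemma tendsto_sbmProb_one (ha : 0 ≤ a) (hb : 0 ≤ b) (hμ : IsProbVec μ) (hν : IsProbVec ν)
    {A : ∀ n : ℕ, Set ((Fin n → Bool) × EdgeConf n L)} {δ : ℝ} (hδ : 0 < δ) {ε : ℕ → ℝ}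
    (hε : Tendsto ε atTop (nhds 0)) {bad : ∀ n, (Fin n → Bool) → Set (EdgeConf n L)}
    (hbad : ∀ n σ, IsSBMParam n a b μ ν → sbmCondProb n a b μ ν σ (bad n σ) ≤ ε n)
    (hA : ∀ (n : ℕ) (σ : Fin n → Bool),
      |∑ u, signVec σ u| ≤ n * δ → ∀ E, E ∉ bad n σ → (σ, E) ∈ A n) :
    Tendsto (fun n => sbmProb n a b μ ν (A n)) atTop (nhds 1) := by
  have lower : Tendsto (fun n : ℕ => 1 - ((δ ^ 2)⁻¹ / n + ε n)) atTop (nhds 1) := by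
    simpa using ((tendsto_const_div_atTop_nhds_zero_nat (δ ^ 2)⁻¹).add hε).const_sub 1
  refine tendsto_of_tendsto_of_tendsto_of_le_of_le' lower tendsto_const_nhds ?_ ?_
  · filter_upwards [eventually_isSBMParam ha hb hμ hν, eventually_ne_atTop 0] with n h hn
    exact one_sub_le_sbmProb h hn hδ (fun σ => hbad n σ h) (hA n)
  · filter_upwards [eventually_isSBMParam ha hb hμ hν] with n h using sbmProb_le_one h _

end Asymptotics

theorem sdp_correlated_general
    {L : Type*} [Fintype L] (a b : ℝ) (ha : 0 ≤ a) (hb : 0 ≤ b)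
    (μ ν : L → ℝ) (hμ : IsProbVec μ) (hν : IsProbVec ν) (w : L → ℝ)
    (hgap : 512 * √(log 2) <
      (∑ ℓ, (a * μ ℓ - b * ν ℓ) * w ℓ) / √(∑ ℓ, (a * μ ℓ + b * ν ℓ) * w ℓ ^ 2)) :
    Tendsto (fun n : ℕ =>
      sbmProb n a b μ ν
        {x | ∀ Y : Matrix (Fin n) (Fin n) ℝ,
          Y.PosSemidef → (∀ u, Y u u = 1) → mInner (fun _ _ => 1) Y = 0 →
          (∀ Z : Matrix (Fin n) (Fin n) ℝ,
            Z.PosSemidef → (∀ u, Z u u = 1) → mInner (fun _ _ => 1) Z = 0 →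
            mInner (Wmat w x.2) Z ≤ mInner (Wmat w x.2) Y) →
          ∀ (y : Fin n → ℝ) (lam : ℝ),
            Y.mulVec y = lam • y →
            (∀ (lam' : ℝ) (z : Fin n → ℝ), z ≠ 0 → Y.mulVec z = lam' • z → lam' ≤ lam) →
            (∑ u, y u ^ 2) = n →
            0 < overlap n (signVec x.1) (signR y)})
      atTop (nhds 1) := by
  obtain ⟨r, hr, signal, q, ⟨hq₀, hq₁⟩, noise_bound⟩ :=
    exists_signal_gt_and_noise_bound ha hb hμ hν (by norm_num) hgap
  have tail : Tendsto (fun n : ℕ => (1 / 2 : ℝ) ^ n + q ^ n) atTop (nhds 0) := by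
    simpa using (tendsto_pow_atTop_nhds_zero_of_lt_one (by norm_num) one_half_lt_one).add
      (tendsto_pow_atTop_nhds_zero_of_lt_one hq₀ hq₁)
  refine tendsto_sbmProb_one ha hb hμ hν (δ := 1 / 200) (by norm_num) tail noise_bound ?_
  intro n σ hσ E hE Y hpsd hdiag hbal hmax y lam hy htop hnorm
  have hY : IsSDPMaximizer (Wmat w E) Y :=
    ⟨⟨hpsd, hdiag, hbal⟩, fun Z hZ => hmax Z hZ.posSemidef hZ.diag hZ.balanced⟩
  refine hY.overlap_signR_pos hr signal (not_not.1 hE) (hσ.trans_eq (mul_one_div _ _))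
    ⟨hy, htop⟩ ?_
  simpa only [dotProduct, ← pow_two] using hnorm

/-- **Theorem (Semidefinite relaxation, Theorem 2).**
Under the labeled SBM with a weight function `w : 𝓛 → [-1,1]`, the stated technical
condition and the gap condition, a.a.s.: for every maximizer `Y` of `⟨W, Y⟩` over
`{Y ⪰ 0, Y_{uu} = 1, ⟨J, Y⟩ = 0}` and every eigenvector `y` of `Y` for its largest
eigenvalue with `‖y‖ = √n`, the assignment `sign(y)` has positive overlap with the
true type assignment. -/
theorem sdp_correlated
    {L : Type*} [Fintype L] (a b : ℝ) (ha : 0 < a) (hb : 0 < b)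
    (μ ν : L → ℝ) (hμ : IsProbVec μ) (hν : IsProbVec ν)
    (w : L → ℝ) (hw : ∀ ℓ, -1 ≤ w ℓ ∧ w ℓ ≤ 1)
    (htech : 8 * Real.log 2 < ∑ ℓ, w ℓ ^ 2 * (a * μ ℓ + b * ν ℓ))
    (hgap : 512 * Real.sqrt (Real.log 2) <
      (∑ ℓ, (a * μ ℓ - b * ν ℓ) * w ℓ) /
        Real.sqrt (∑ ℓ, (a * μ ℓ + b * ν ℓ) * w ℓ ^ 2)) :
    Filter.Tendsto (fun n : ℕ =>
      sbmProb n a b μ ν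
        {x | ∀ Y : Matrix (Fin n) (Fin n) ℝ,
          Y.PosSemidef → (∀ u, Y u u = 1) → mInner (fun _ _ => 1) Y = 0 →
          (∀ Z : Matrix (Fin n) (Fin n) ℝ,
            Z.PosSemidef → (∀ u, Z u u = 1) → mInner (fun _ _ => 1) Z = 0 →
            mInner (Wmat w x.2) Z ≤ mInner (Wmat w x.2) Y) →
          ∀ (y : Fin n → ℝ) (lam : ℝ),
            Y.mulVec y = lam • y →
            (∀ (lam' : ℝ) (z : Fin n → ℝ), z ≠ 0 → Y.mulVec z = lam' • z → lam' ≤ lam) →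
            (∑ u, y u ^ 2) = n →
            0 < overlap n (signVec x.1) (signR y)})
      Filter.atTop (nhds 1) :=

  sdp_correlated_general a b ha.le hb.le μ ν hμ hν w hgap

end LSBM
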